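/- Lower bound for the Wehrl entropy of SU(1,1) coherent state transforms (Theorem 3.4): Let k > 1 be a real number and let f(ζ) = (1−|ζ|²)^k Φ(ζ) with Φ holomorphic on D and ∫_D |f|² dν_k = 1. Then the Wehrl entropy S(|f|²) = −∫_D |f(ζ)|² ln(|f(ζ)|²) dν_k(ζ) satisfies S(|f|²) ≥ 2k · ln(1 + 1/(2k−1)) = 2k · ln(2k/(2k−1)). -/

import Mathlib

open MeasureTheory Metric

/-- The measure `ν_k` on the unit disc `D ⊆ ℂ`, with density
`((2k−1)/π)(1−|ζ|²)^{−2}` with respect to Lebesgue measure. -/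
noncomputable def nuMeasure (k : ℝ) : Measure ℂ :=
  (volume.restrict (ball (0 : ℂ) 1)).withDensity
    (fun ζ => ENNReal.ofReal ((2 * k - 1) / Real.pi * ((1 - ‖ζ‖ ^ 2) ^ 2)⁻¹))

open MeasureTheory Metric

open Set Filter Topology in
lemma transport_exists {S : Set ℝ} (hS : IsOpen S) (hSc : S.OrdConnected)
    {a b : ℝ → ℝ} (ha : ContinuousOn a S) (ha0 : ∀ x ∈ S, 0 ≤ a x) (hIntg : IntegrableOn a S)
    (hpos : ∀ u ∈ S, ∀ v ∈ S, u < v → ∃ c ∈ Icc u v, 0 < a c)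
    {c d : ℝ} (hcd : c < d) (hb : ContinuousOn b (Icc c d)) (hb0 : ∀ t ∈ Ioo c d, 0 < b t)
    {l : ℝ} (hl : 0 < l) (hmass : ∫ x in S, a x = l * ∫ t in c..d, b t) :
    ∃ T : ℝ → ℝ, (∀ x ∈ S, T x ∈ Ioo c d) ∧ StrictMonoOn T S ∧ T '' S = Ioo c d ∧
      ∀ x ∈ S, HasDerivAt T (a x / (l * b (T x))) x := by
  have hSm : MeasurableSet S := hS.measurableSet
  set a' : ℝ → ℝ := S.indicator a with ha'
  have hIntg' : Integrable a' := (integrable_indicator_iff hSm).2 hIntg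
  have ha'0 : ∀ x, 0 ≤ a' x := fun x => indicator_nonneg ha0 x
  set A : ℝ → ℝ := fun x => ∫ t in Iic x, a' t with hA
  have hAsub : ∀ u v, A v - A u = ∫ t in u..v, a' t := fun u v =>
    intervalIntegral.integral_Iic_sub_Iic hIntg'.integrableOn hIntg'.integrableOn
  have htot : ∫ x, a' x = ∫ x in S, a x := integral_indicator hSm
  set M := ∫ x in S, a x with hM
  have hAcont : Continuous A := by
    have : A = fun x => A 0 + ∫ t in (0:ℝ)..x, a' t := by
      funext x; rw [← hAsub]; ring
    rw [this]
    exact continuous_const.add (hIntg'.continuous_primitive 0)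
  have hAmono : Monotone A := by
    intro u v huv
    have := hAsub u v
    have h2 : 0 ≤ ∫ t in u..v, a' t := intervalIntegral.integral_nonneg huv (fun t _ => ha'0 t)
    linarith
  have hAstrict : StrictMonoOn A S := by
    intro u hu v hv huv
    have h1 := hAsub u v
    have hsub : Icc u v ⊆ S := hSc.out hu hv
    have h2 : ∫ t in u..v, a' t = ∫ t in u..v, a t := by
      apply intervalIntegral.integral_congr
      intro t ht
      rw [uIcc_of_le huv.le] at ht
      exact indicator_of_mem (hsub ht) _
    have h3 : 0 < ∫ t in u..v, a t :=
      intervalIntegral.integral_pos huv (ha.mono hsub)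
        (fun x hx => ha0 x (hsub (Ioc_subset_Icc_self hx))) (hpos u hu v hv huv)
    show A u < A v
    linarith
  have hAbot : Tendsto A atBot (𝓝 0) :=
    tendsto_integral_Iic_zero tendsto_id
  have hAtop : Tendsto A atTop (𝓝 M) := by
    have h1 : Tendsto (fun x => A 0 + ∫ t in (0:ℝ)..x, a' t) atTop (𝓝 (A 0 + ∫ t in Ioi (0:ℝ), a' t)) :=
      tendsto_const_nhds.add (intervalIntegral_tendsto_integral_Ioi 0 hIntg'.integrableOn tendsto_id)
    have h2 : A 0 + ∫ t in Ioi (0:ℝ), a' t = M := by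
      rw [← htot]
      exact intervalIntegral.integral_Iic_add_Ioi hIntg'.integrableOn hIntg'.integrableOn
    rw [h2] at h1
    refine h1.congr ?_
    intro x; rw [← hAsub]; ring
  have hAge : ∀ x, 0 ≤ A x := fun x => hAmono.le_of_tendsto hAbot x
  have hAle : ∀ x, A x ≤ M := fun x => hAmono.ge_of_tendsto hAtop x
  have hApos : ∀ x ∈ S, 0 < A x := by
    intro x hx
    obtain ⟨y, hy, hyx⟩ : ∃ y ∈ S, y < x := by
      obtain ⟨e, he, hb⟩ := Metric.isOpen_iff.1 hS x hx
      exact ⟨x - e/2, hb (by simp [abs_of_pos, he]), by linarith⟩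
    exact (hAge y).trans_lt (hAstrict hy hx hyx)
  have hAlt : ∀ x ∈ S, A x < M := by
    intro x hx
    obtain ⟨y, hy, hyx⟩ : ∃ y ∈ S, x < y := by
      obtain ⟨e, he, hb⟩ := Metric.isOpen_iff.1 hS x hx
      exact ⟨x + e/2, hb (by simp [abs_of_pos, he]), by linarith⟩
    exact (hAstrict hx hy hyx).trans_le (hAle y)
  have hAonto : ∀ s ∈ Ioo 0 M, ∃ x ∈ S, A x = s := by
    intro s hs
    obtain ⟨x1, hx1⟩ := (hAbot.eventually (gt_mem_nhds hs.1)).exists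
    obtain ⟨x2, hx2⟩ := (hAtop.eventually (lt_mem_nhds hs.2)).exists
    obtain ⟨x, hx⟩ := mem_range_of_exists_le_of_exists_ge hAcont ⟨x1, hx1.le⟩ ⟨x2, hx2.le⟩
    refine ⟨x, ?_, hx⟩
    by_contra hxS
    have : (∀ y ∈ S, x < y) ∨ (∀ y ∈ S, y < x) := by
      by_contra! hcon
      obtain ⟨⟨y, hy, hyx⟩, ⟨z, hz, hzx⟩⟩ := hcon
      exact hxS (hSc.out hy hz ⟨hyx, hzx⟩)
    rcases this with h | h
    · have : A x = 0 := by
        apply setIntegral_eq_zero_of_forall_eq_zero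
        intro t ht
        apply indicator_of_notMem
        intro hts
        exact absurd (h t hts) (not_lt.2 ht)
      rw [hx] at this; exact hs.1.ne' this
    · have : A x = M := by
        rw [← htot]
        apply setIntegral_eq_integral_of_forall_compl_eq_zero
        intro t ht
        apply indicator_of_notMem
        intro hts
        exact ht (h t hts).le
      rw [hx] at this; exact hs.2.ne this
  -- target
  set B : ℝ → ℝ := fun t => ∫ u in c..t, b u with hB
  have hbint : IntervalIntegrable b volume c d := (hb.mono (by rw [uIcc_of_le hcd.le])).intervalIntegrable
  have hBcont : ContinuousOn B (Icc c d) := by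
    have := intervalIntegral.continuousOn_primitive_interval (a := c) (b := d) (f := b) (μ := volume)
      (by rw [uIcc_of_le hcd.le]; exact hb.integrableOn_Icc)
    rwa [uIcc_of_le hcd.le] at this
  have hbsub : ∀ u ∈ Icc c d, ∀ v ∈ Icc c d, IntervalIntegrable b volume u v := by
    intro u hu v hv
    exact (hb.mono (by
      exact (convex_Icc c d).ordConnected.uIcc_subset hu hv)).intervalIntegrable
  have hBstrict : StrictMonoOn B (Icc c d) := by
    intro u hu v hv huv
    have h1 : B v - B u = ∫ t in u..v, b t :=
      intervalIntegral.integral_interval_sub_left (hbsub c ⟨le_rfl, hcd.le⟩ v hv)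
        (hbsub c ⟨le_rfl, hcd.le⟩ u hu)
    have h3 : 0 < ∫ t in u..v, b t :=
      intervalIntegral.intervalIntegral_pos_of_pos_on (hbsub u hu v hv)
        (fun x hx => hb0 x ⟨hu.1.trans_lt hx.1, hx.2.trans_le hv.2⟩) huv
    show B u < B v
    linarith
  have hBc : B c = 0 := intervalIntegral.integral_same
  have hBex : ∀ s, ∃ t, s ∈ Ioo 0 (B d) → t ∈ Ioo c d ∧ B t = s := by
    intro s
    by_cases hs : s ∈ Ioo 0 (B d)
    · have := intermediate_value_Ioo hcd.le hBcont
      rw [hBc] at this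
      obtain ⟨t, ht, hts⟩ := this hs
      exact ⟨t, fun _ => ⟨ht, hts⟩⟩
    · exact ⟨0, fun h => absurd h hs⟩
  choose Bi hBi using hBex
  have hMB : M = l * B d := hmass
  have hBistrict : StrictMonoOn Bi (Ioo 0 (B d)) := by
    intro u hu v hv huv
    obtain ⟨h1, h2⟩ := hBi u hu
    obtain ⟨h3, h4⟩ := hBi v hv
    rw [← hBstrict.lt_iff_lt (Ioo_subset_Icc_self h1) (Ioo_subset_Icc_self h3), h2, h4]
    exact huv
  have hBmem : ∀ t ∈ Ioo c d, B t ∈ Ioo 0 (B d) := by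
    intro t ht
    refine ⟨?_, hBstrict (Ioo_subset_Icc_self ht) ⟨hcd.le, le_rfl⟩ ht.2⟩
    rw [← hBc]
    exact hBstrict ⟨le_rfl, hcd.le⟩ (Ioo_subset_Icc_self ht) ht.1
  have hBiB : ∀ t ∈ Ioo c d, Bi (B t) = t := by
    intro t ht
    obtain ⟨h1, h2⟩ := hBi (B t) (hBmem t ht)
    exact hBstrict.injOn (Ioo_subset_Icc_self h1) (Ioo_subset_Icc_self ht) h2
  have hBiimg : Bi '' (Ioo 0 (B d)) = Ioo c d := by
    apply Subset.antisymm
    · rintro _ ⟨s, hs, rfl⟩; exact (hBi s hs).1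
    · intro t ht; exact ⟨B t, hBmem t ht, hBiB t ht⟩
  have hBider : ∀ s ∈ Ioo 0 (B d), HasDerivAt Bi (b (Bi s))⁻¹ s := by
    intro s hs
    obtain ⟨h1, h2⟩ := hBi s hs
    have hct : ContinuousAt Bi s :=
      hBistrict.continuousAt_of_image_mem_nhds (Ioo_mem_nhds hs.1 hs.2)
        (by rw [hBiimg]; exact Ioo_mem_nhds h1.1 h1.2)
    have hbc : ContinuousAt b (Bi s) := hb.continuousAt (Icc_mem_nhds h1.1 h1.2)
    have hd : HasDerivAt B (b (Bi s)) (Bi s) := by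
      apply intervalIntegral.integral_hasDerivAt_right
      · exact hbsub c ⟨le_rfl, hcd.le⟩ _ (Ioo_subset_Icc_self h1)
      · exact (hb.mono Ioo_subset_Icc_self).stronglyMeasurableAtFilter isOpen_Ioo _ h1
      · exact hbc
    refine HasDerivAt.of_local_left_inverse hct hd (hb0 _ h1).ne' ?_
    filter_upwards [Ioo_mem_nhds hs.1 hs.2] with y hy
    exact (hBi y hy).2
  have hAl : ∀ x ∈ S, A x / l ∈ Ioo 0 (B d) := by
    intro x hx
    refine ⟨div_pos (hApos x hx) hl, ?_⟩
    rw [div_lt_iff₀ hl, mul_comm, ← hMB]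
    exact hAlt x hx
  refine ⟨fun x => Bi (A x / l), ?_, ?_, ?_, ?_⟩
  · intro x hx; exact (hBi _ (hAl x hx)).1
  · intro u hu v hv huv
    exact hBistrict (hAl u hu) (hAl v hv) ((div_lt_div_iff_of_pos_right hl).2 (hAstrict hu hv huv))
  · apply Subset.antisymm
    · rintro _ ⟨x, hx, rfl⟩; exact (hBi _ (hAl x hx)).1
    · intro t ht
      have h1 := hBmem t ht
      obtain ⟨x, hx, hxs⟩ := hAonto (l * B t) ⟨mul_pos hl h1.1, by
        rw [hMB]; exact mul_lt_mul_of_pos_left h1.2 hl⟩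
      refine ⟨x, hx, ?_⟩
      show Bi (A x / l) = t
      rw [hxs, mul_div_cancel_left₀ _ hl.ne']
      exact hBiB t ht
  · intro x hx
    have hAd : HasDerivAt A (a x) x := by
      have hloc : ContinuousAt a x := ha.continuousAt (hS.mem_nhds hx)
      have hae : a' =ᶠ[𝓝 x] a := by
        filter_upwards [hS.mem_nhds hx] with y hy
        exact indicator_of_mem hy _
      have h1 : HasDerivAt (fun u => ∫ t in (0:ℝ)..u, a' t) (a' x) x := by
        apply intervalIntegral.integral_hasDerivAt_right
        · exact hIntg'.intervalIntegrable
        · exact hIntg'.aestronglyMeasurable.stronglyMeasurableAtFilter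
        · exact hloc.congr hae.symm
      rw [hae.eq_of_nhds] at h1
      have h2 := h1.const_add (A 0)
      refine h2.congr_of_eventuallyEq (Eventually.of_forall fun u => ?_)
      show A u = A 0 + _
      rw [← hAsub]; ring
    have h2 := (hBider _ (hAl x hx)).comp x (hAd.div_const l)
    have e : a x / (l * b (Bi (A x / l))) = (b (Bi (A x / l)))⁻¹ * (a x / l) := by
      rw [div_eq_mul_inv, mul_inv, div_eq_mul_inv]
      ring
    show HasDerivAt (fun x => Bi (A x / l)) (a x / (l * b (Bi (A x / l)))) x
    rw [e]
    exact h2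

open MeasureTheory Metric

/-- `|z+i|²` in coordinates. -/
noncomputable def GG (x y : ℝ) : ℝ := x ^ 2 + (y + 1) ^ 2

/-- Lebesgue measure on the upper half plane in coordinates. -/
noncomputable def muH : Measure (ℝ × ℝ) :=
  (volume : Measure ℝ).prod ((volume : Measure ℝ).restrict (Set.Ioi 0))

lemma GG_ge_one (x : ℝ) {y : ℝ} (hy : 0 ≤ y) : 1 ≤ GG x y := by
  unfold GG; nlinarith [sq_nonneg x]

lemma GG_pos (x : ℝ) {y : ℝ} (hy : 0 ≤ y) : 0 < GG x y := by
  linarith [GG_ge_one x hy]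

lemma GG_cont : Continuous (fun p : ℝ × ℝ => GG p.1 p.2) := by
  unfold GG; fun_prop

lemma muH_eq : muH = (volume : Measure (ℝ × ℝ)).restrict (Set.univ ×ˢ Set.Ioi 0) := by
  rw [muH, Measure.volume_eq_prod, ← Measure.prod_restrict, Measure.restrict_univ]

open Set Filter Topology in
lemma dom_exists {s t : ℝ} (hs : 0 ≤ s) (ht : s / 2 + 1 < t) :
    ∃ gx gy : ℝ → ℝ, Integrable gx ∧ IntegrableOn gy (Ioi 0) ∧ Continuous gx ∧
      Tendsto gx atBot (𝓝 0) ∧ Tendsto gx atTop (𝓝 0) ∧ Tendsto gy atTop (𝓝 0) ∧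
      (∀ x, 0 ≤ gx x) ∧ (∀ x, gx x ≤ 1) ∧ (∀ y > 0, 0 ≤ gy y) ∧ (∀ y > 0, gy y ≤ 1) ∧
      ∀ x, ∀ y > 0, y ^ s * GG x y ^ (-t) ≤ gx x * gy y := by
  obtain ⟨δ, hδ⟩ : ∃ δ, δ = (t - s / 2 - 1) / 2 := ⟨_, rfl⟩
  have hδ0 : 0 < δ := by rw [hδ]; linarith
  have hlim : Tendsto (fun x : ℝ => 1 + x ^ 2) atTop atTop :=
    tendsto_atTop_add_const_left _ _ (tendsto_pow_atTop two_ne_zero)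
  have hlim2 : Tendsto (fun x : ℝ => 1 + x ^ 2) atBot atTop := by
    have := hlim.comp tendsto_neg_atBot_atTop
    refine this.congr (fun x => by simp)
  refine ⟨fun x => (1 + x ^ 2) ^ (-(1 / 2 + δ)), fun y => (1 + y) ^ (-(1 + 2 * δ)),
    ?_, ?_, ?_, ?_, ?_, ?_, ?_, ?_, ?_, ?_, ?_⟩
  · have := integrable_rpow_neg_one_add_norm_sq (E := ℝ) (μ := volume) (r := 1 + 2 * δ) (by simp; linarith)
    refine this.congr (Eventually.of_forall fun x => ?_)
    simp only [Real.norm_eq_abs, sq_abs]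
    congr 1; ring
  · have := integrableOn_add_rpow_Ioi_of_lt (a := -(1 + 2 * δ)) (c := 0) (m := 1) (by linarith) (by norm_num)
    refine this.congr_fun (fun y hy => ?_) measurableSet_Ioi
    simp only [add_comm]
  · refine Continuous.rpow_const (by fun_prop) (fun x => Or.inl (by positivity))
  · exact (tendsto_rpow_neg_atTop (by linarith)).comp hlim2
  · exact (tendsto_rpow_neg_atTop (by linarith)).comp hlim
  · exact (tendsto_rpow_neg_atTop (by linarith)).comp (tendsto_atTop_add_const_left _ _ tendsto_id)
  · intro x; positivity
  · intro x; exact Real.rpow_le_one_of_one_le_of_nonpos (by nlinarith) (by linarith)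
  · intro y hy; have : 0 < y := hy; positivity
  · intro y hy; have : 0 < y := hy; exact Real.rpow_le_one_of_one_le_of_nonpos (by linarith) (by linarith)
  · intro x y hy
    have hy0 : 0 < y := hy
    have h1 : 1 + x ^ 2 ≤ GG x y := by unfold GG; nlinarith
    have h2 : (1 + y) ^ 2 ≤ GG x y := by unfold GG; nlinarith [sq_nonneg x]
    have hG := GG_pos x hy0.le
    have e1 : GG x y ^ (-t) = GG x y ^ (-(1 / 2 + δ)) * GG x y ^ (-((s + 1) / 2 + δ)) := by
      rw [← Real.rpow_add hG]; congr 1; rw [hδ]; ring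
    have e2 : GG x y ^ (-(1 / 2 + δ)) ≤ (1 + x ^ 2) ^ (-(1 / 2 + δ)) :=
      Real.rpow_le_rpow_of_nonpos (by positivity) h1 (by linarith)
    have e3 : GG x y ^ (-((s + 1) / 2 + δ)) ≤ (1 + y) ^ (-(s + 1 + 2 * δ)) := by
      calc _ ≤ ((1 + y) ^ 2) ^ (-((s + 1) / 2 + δ)) :=
            Real.rpow_le_rpow_of_nonpos (by positivity) h2 (by linarith)
        _ = _ := by
            rw [← Real.rpow_natCast, ← Real.rpow_mul (by positivity)]
            congr 1; push_cast; ring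
    have e4 : y ^ s ≤ (1 + y) ^ s := Real.rpow_le_rpow hy0.le (by linarith) hs
    have e5 : (1 + y) ^ s * (1 + y) ^ (-(s + 1 + 2 * δ)) = (1 + y) ^ (-(1 + 2 * δ)) := by
      rw [← Real.rpow_add (by positivity)]; congr 1; ring
    show _ ≤ (1 + x ^ 2) ^ (-(1 / 2 + δ)) * (1 + y) ^ (-(1 + 2 * δ))
    rw [e1, ← e5]
    calc y ^ s * (GG x y ^ (-(1 / 2 + δ)) * GG x y ^ (-((s + 1) / 2 + δ)))
        ≤ (1 + y) ^ s * ((1 + x ^ 2) ^ (-(1 / 2 + δ)) * (1 + y) ^ (-(s + 1 + 2 * δ))) := by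
          gcongr
      _ = _ := by ring

open Set Filter Topology in
lemma dom_prod {s t C : ℝ} (hs : 0 ≤ s) (ht : s / 2 + 1 < t) {F : ℝ → ℝ → ℝ}
    (hF : ContinuousOn (fun p : ℝ × ℝ => F p.1 p.2) (univ ×ˢ Ioi 0))
    (hb : ∀ x, ∀ y > 0, |F x y| ≤ C * (y ^ s * GG x y ^ (-t))) :
    Integrable (fun p : ℝ × ℝ => F p.1 p.2) muH := by
  obtain ⟨gx, gy, h1, h2, -, -, -, -, h3, -, h4, -, h5⟩ := dom_exists hs ht
  have hm : AEStronglyMeasurable (fun p : ℝ × ℝ => F p.1 p.2) muH := by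
    rw [muH_eq]
    exact hF.aestronglyMeasurable (MeasurableSet.univ.prod measurableSet_Ioi)
  have hd : Integrable (fun p : ℝ × ℝ => |C| * (gx p.1 * gy p.2)) muH :=
    (h1.mul_prod h2).const_mul _
  refine hd.mono' hm ?_
  have : ∀ᵐ p ∂muH, p ∈ (univ : Set ℝ) ×ˢ Ioi (0:ℝ) := by
    rw [muH_eq]; exact ae_restrict_mem (MeasurableSet.univ.prod measurableSet_Ioi)
  filter_upwards [this] with p hp
  have hy : p.2 > 0 := hp.2
  rw [Real.norm_eq_abs]
  refine (hb p.1 p.2 hy).trans ?_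
  have hG := GG_pos p.1 hy.le
  calc C * (p.2 ^ s * GG p.1 p.2 ^ (-t)) ≤ |C| * (p.2 ^ s * GG p.1 p.2 ^ (-t)) := by
        gcongr; exact le_abs_self C
    _ ≤ _ := by exact mul_le_mul_of_nonneg_left (h5 _ _ hy) (abs_nonneg C)

open Set Filter Topology in
lemma dom_y {s t C : ℝ} (hs : 0 ≤ s) (ht : s / 2 + 1 < t) {F : ℝ → ℝ} (x : ℝ)
    (hF : ContinuousOn F (Ioi 0))
    (hb : ∀ y > 0, |F y| ≤ C * (y ^ s * GG x y ^ (-t))) :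
    IntegrableOn F (Ioi 0) := by
  obtain ⟨gx, gy, h1, h2, -, -, -, -, h3, h3', h4, -, h5⟩ := dom_exists hs ht
  have hd : IntegrableOn (fun y => |C| * (gx x * gy y)) (Ioi 0) := (h2.const_mul _).const_mul _
  refine hd.mono' (hF.aestronglyMeasurable measurableSet_Ioi) ?_
  filter_upwards [ae_restrict_mem measurableSet_Ioi] with y hy
  have hy : y > 0 := hy
  have hG := GG_pos x hy.le
  rw [Real.norm_eq_abs]
  refine (hb y hy).trans ?_
  calc C * (y ^ s * GG x y ^ (-t)) ≤ |C| * (y ^ s * GG x y ^ (-t)) := by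
        gcongr; exact le_abs_self C
    _ ≤ _ := by exact mul_le_mul_of_nonneg_left (h5 _ _ hy) (abs_nonneg C)

open Set Filter Topology in
lemma dom_lim {s t C : ℝ} (hs : 0 ≤ s) (ht : s / 2 + 1 < t) {F : ℝ → ℝ} (x : ℝ)
    (hb : ∀ y > 0, |F y| ≤ C * (y ^ s * GG x y ^ (-t))) :
    Tendsto F atTop (𝓝 0) := by
  obtain ⟨gx, gy, h1, h2, -, -, -, h6, h3, h3', h4, -, h5⟩ := dom_exists hs ht
  have hl : Tendsto (fun y => |C| * (gx x * gy y)) atTop (𝓝 0) := by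
    simpa using (h6.const_mul (gx x)).const_mul |C|
  refine squeeze_zero_norm' ?_ hl
  filter_upwards [eventually_gt_atTop 0] with y hy
  have hy : y > 0 := hy
  have hG := GG_pos x hy.le
  rw [Real.norm_eq_abs]
  refine (hb y hy).trans ?_
  calc C * (y ^ s * GG x y ^ (-t)) ≤ |C| * (y ^ s * GG x y ^ (-t)) := by
        gcongr; exact le_abs_self C
    _ ≤ _ := by exact mul_le_mul_of_nonneg_left (h5 _ _ hy) (abs_nonneg C)

/-- The weighted arithmetic-geometric mean inequality used in the transport argument. -/
lemma amgm_point {k : ℝ} (hk : 1 < k) {P y G t1 t2 e : ℝ} (hP : 0 ≤ P) (hy : 0 < y) (hG : 0 < G)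
    (h1 : 0 ≤ t1) (h2 : 0 ≤ t2) (he : 0 ≤ e)
    (h : y ^ (2 * k) * P ^ (1 + 1 / k) = t1 * t2 * (e ^ (2 * k) * G ^ (-(2 * k + 2)))) :
    (2 * k + 2) * (G * (y ^ (2 * k) * P ^ (1 + 1 / k))) ≤
      P ^ (1 + 1 / (2 * k)) * (y ^ (2 * k) * t1 + (y ^ (2 * k) * t2 + 2 * k * y ^ (2 * k - 1) * e)) := by
  have hD : 0 < 2 * k + 2 := by linarith
  have hw := Real.geom_mean_le_arith_mean3_weighted (w₁ := 1 / (2 * k + 2)) (w₂ := 1 / (2 * k + 2))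
    (w₃ := 2 * k / (2 * k + 2)) (by positivity) (by positivity) (by positivity) h1 h2
    (show 0 ≤ e / y by positivity) (by field_simp; ring)
  have hkey : t1 ^ (1 / (2 * k + 2)) * t2 ^ (1 / (2 * k + 2)) * (e / y) ^ (2 * k / (2 * k + 2))
      = G * P ^ (1 / (2 * k)) := by
    have hyp : 0 < y ^ (2 * k) := by positivity
    have hGp : 0 < G ^ (2 * k + 2) := by positivity
    have e1 : t1 * t2 * (e / y) ^ (2 * k) = G ^ (2 * k + 2) * P ^ (1 + 1 / k) := by
      rw [Real.div_rpow he hy.le]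
      rw [Real.rpow_neg hG.le] at h
      field_simp at h ⊢
      linarith
    have e2 : t1 ^ (1 / (2 * k + 2)) * t2 ^ (1 / (2 * k + 2)) * (e / y) ^ (2 * k / (2 * k + 2))
        = (t1 * t2 * (e / y) ^ (2 * k)) ^ (1 / (2 * k + 2)) := by
      rw [Real.mul_rpow (by positivity) (by positivity), Real.mul_rpow h1 h2,
        ← Real.rpow_mul (by positivity)]
      congr 2; ring
    rw [e2, e1, Real.mul_rpow (by positivity) (by positivity), ← Real.rpow_mul hG.le,
      ← Real.rpow_mul hP]
    rw [mul_one_div_cancel hD.ne', Real.rpow_one]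
    congr 2
    field_simp
  rw [hkey] at hw
  have hpos : 0 ≤ P ^ (1 + 1 / (2 * k)) * y ^ (2 * k) * (2 * k + 2) := by positivity
  have h3 := mul_le_mul_of_nonneg_left hw hpos
  have e3 : P ^ (1 + 1 / (2 * k)) * P ^ (1 / (2 * k)) = P ^ (1 + 1 / k) := by
    rw [← Real.rpow_add_of_nonneg hP (by positivity) (by positivity)]
    congr 1; field_simp; ring
  have e4 : y ^ (2 * k) = y ^ (2 * k - 1) * y := by
    rw [← Real.rpow_add_one hy.ne']; congr 1; ring
  have hl : P ^ (1 + 1 / (2 * k)) * y ^ (2 * k) * (2 * k + 2) * (G * P ^ (1 / (2 * k)))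
     = (2 * k + 2) * (G * (y ^ (2 * k) * P ^ (1 + 1 / k))) := by
    rw [← e3]; ring
  rw [hl] at h3
  refine h3.trans (le_of_eq ?_)
  rw [e4]
  field_simp
  ring

open MeasureTheory Metric

open Set Filter Topology in
lemma core_slice {k R C x ξ τ θ : ℝ} (hk : 1 < k) (hR : 0 < R) (hτ : 0 < τ)
    {p ux uy V : ℝ → ℝ} (hp0 : ∀ y > 0, 0 ≤ p y)
    (hpc : ContinuousOn p (Ioi 0)) (huxc : ContinuousOn ux (Ioi 0)) (huyc : ContinuousOn uy (Ioi 0))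
    (hVc : ContinuousOn V (Ioi 0))
    (hder : ∀ y > 0, HasDerivAt (fun y => p y ^ (1 + 1 / (2 * k))) (uy y) y)
    (hbr : ∀ y > 0, p y ^ (1 + 1 / (2 * k)) ≤ C * GG x y ^ (-(2 * k + 1)))
    (hbp : ∀ y > 0, p y ^ (1 + 1 / k) ≤ C * GG x y ^ (-(2 * k + 1)))
    (hbux : ∀ y > 0, |ux y| ≤ C * GG x y ^ (-(2 * k + 1)))
    (hbuy : ∀ y > 0, |uy y| ≤ C * GG x y ^ (-(2 * k + 1)))
    (hbV : ∀ y > 0, |V y| ≤ C * GG x y ^ (-(2 * k + 1)))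
    (hnv : ∀ u > 0, ∀ v > u, ∃ c ∈ Icc u v, 0 < p c)
    (hH : ∀ y > 0, ∀ a b : ℝ, -(ux y * a + uy y * b) ≤
      (2 + 1 / k) / 2 * (θ * V y + p y ^ (1 + 1 / k) * (a ^ 2 + b ^ 2) / θ))
    (hmass : ∫ y in Ioi 0, y ^ (2 * k) * p y ^ (1 + 1 / k) =
      τ * ∫ η in (0:ℝ)..R, η ^ (2 * k) * GG ξ η ^ (-(2 * k + 2))) :
    (2 * k + 2) * (τ * ∫ η in (0:ℝ)..R, η ^ (2 * k) * GG ξ η ^ (-(2 * k + 1)))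
      + 2 * k * ∫ y in Ioi 0, y ^ (2 * k - 1) * p y ^ (1 + 1 / (2 * k)) ≤
    τ * (∫ y in Ioi 0, y ^ (2 * k) * p y ^ (1 + 1 / (2 * k)))
      + ξ * (∫ y in Ioi 0, y ^ (2 * k) * ux y)
      + (2 + 1 / k) / 2 * (θ * (∫ y in Ioi 0, y ^ (2 * k) * V y)
        + (τ * ∫ η in (0:ℝ)..R, η ^ (2 * k) * GG ξ η ^ (-(2 * k + 1))) / θ) := by
  have hk0 : 0 < k := by linarith
  have hrk : (0:ℝ) ≤ 1 + 1 / k := by positivity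
  have hrk2 : (0:ℝ) ≤ 1 + 1 / (2 * k) := by positivity
  have hd1 : 2 * k / 2 + 1 < 2 * k + 1 := by linarith
  have hd2 : (2 * k - 1) / 2 + 1 < 2 * k + 1 := by linarith
  -- powers
  have cy : ∀ s : ℝ, ContinuousOn (fun y : ℝ => y ^ s) (Ioi 0) := fun s y hy =>
    (Real.continuousAt_rpow_const _ _ (Or.inl (ne_of_gt hy))).continuousWithinAt
  have cpr : ContinuousOn (fun y => p y ^ (1 + 1 / (2 * k))) (Ioi 0) :=
    hpc.rpow_const (fun y _ => Or.inr hrk2)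
  have cpk : ContinuousOn (fun y => p y ^ (1 + 1 / k)) (Ioi 0) :=
    hpc.rpow_const (fun y _ => Or.inr hrk)
  have hbd : ∀ (s : ℝ) (F : ℝ → ℝ), (∀ y > 0, |F y| ≤ C * GG x y ^ (-(2 * k + 1))) →
      ∀ y > 0, |y ^ s * F y| ≤ C * (y ^ s * GG x y ^ (-(2 * k + 1))) := by
    intro s F hF y hy
    have : 0 ≤ y ^ s := Real.rpow_nonneg (le_of_lt hy) s
    rw [abs_mul, abs_of_nonneg this]
    nlinarith [mul_le_mul_of_nonneg_left (hF y hy) this]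
  have hbr' : ∀ y > 0, |p y ^ (1 + 1 / (2 * k))| ≤ C * GG x y ^ (-(2 * k + 1)) := fun y hy => by
    rw [abs_of_nonneg (Real.rpow_nonneg (hp0 y hy) _)]; exact hbr y hy
  have hbp' : ∀ y > 0, |p y ^ (1 + 1 / k)| ≤ C * GG x y ^ (-(2 * k + 1)) := fun y hy => by
    rw [abs_of_nonneg (Real.rpow_nonneg (hp0 y hy) _)]; exact hbp y hy
  have iW : IntegrableOn (fun y => y ^ (2 * k) * p y ^ (1 + 1 / (2 * k))) (Ioi 0) :=
    dom_y (by linarith) hd1 x ((cy _).mul cpr) (hbd _ _ hbr')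
  have iY : IntegrableOn (fun y => y ^ (2 * k - 1) * p y ^ (1 + 1 / (2 * k))) (Ioi 0) :=
    dom_y (by linarith) hd2 x ((cy _).mul cpr) (hbd _ _ hbr')
  have is : IntegrableOn (fun y => y ^ (2 * k) * p y ^ (1 + 1 / k)) (Ioi 0) :=
    dom_y (by linarith) hd1 x ((cy _).mul cpk) (hbd _ _ hbp')
  have iux : IntegrableOn (fun y => y ^ (2 * k) * ux y) (Ioi 0) :=
    dom_y (by linarith) hd1 x ((cy _).mul huxc) (hbd _ _ hbux)
  have iuy : IntegrableOn (fun y => y ^ (2 * k) * uy y) (Ioi 0) :=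
    dom_y (by linarith) hd1 x ((cy _).mul huyc) (hbd _ _ hbuy)
  have iV : IntegrableOn (fun y => y ^ (2 * k) * V y) (Ioi 0) :=
    dom_y (by linarith) hd1 x ((cy _).mul hVc) (hbd _ _ hbV)
  have cG : ∀ t : ℝ, ContinuousOn (fun η : ℝ => η ^ (2 * k) * GG ξ η ^ (-t)) (Icc 0 R) := by
    intro t
    apply ContinuousOn.mul
    · exact continuousOn_id.rpow_const (fun y _ => Or.inr (by linarith))
    · refine ContinuousOn.rpow_const ?_ (fun y hy => Or.inl (GG_pos ξ hy.1).ne')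
      exact (GG_cont.comp (Continuous.prodMk_right ξ)).continuousOn
  obtain ⟨T, hTm, hTmono, hTimg, hTd⟩ := transport_exists (S := Ioi (0:ℝ)) isOpen_Ioi ordConnected_Ioi
    (a := fun y => y ^ (2 * k) * p y ^ (1 + 1 / k))
    (b := fun η => η ^ (2 * k) * GG ξ η ^ (-(2 * k + 2)))
    ((cy _).mul cpk)
    (fun y hy => mul_nonneg (Real.rpow_nonneg (le_of_lt hy) _) (Real.rpow_nonneg (hp0 y hy) _))
    is
    (by
      intro u hu v hv huv
      obtain ⟨c, hc, hpc⟩ := hnv u hu v huv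
      have : 0 < c := lt_of_lt_of_le hu hc.1
      exact ⟨c, hc, by positivity⟩)
    hR (cG _)
    (by
      intro t ht
      have h1 : 0 < t := ht.1
      have := GG_pos ξ h1.le
      positivity)
    hτ hmass
  set T' : ℝ → ℝ := fun y => y ^ (2 * k) * p y ^ (1 + 1 / k) /
    (τ * (T y ^ (2 * k) * GG ξ (T y) ^ (-(2 * k + 2)))) with hT'
  have hTpos : ∀ y > 0, 0 < T y := fun y hy => (hTm y hy).1
  have hTlt : ∀ y > 0, T y < R := fun y hy => (hTm y hy).2
  have hGp : ∀ y > 0, 0 < GG ξ (T y) := fun y hy => GG_pos ξ (hTpos y hy).le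
  have hT'0 : ∀ y > 0, 0 ≤ T' y := by
    intro y hy
    have h1 := hTpos y hy
    have h2 := hGp y hy
    have h3 := Real.rpow_nonneg (hp0 y hy) (1 + 1 / k)
    have h4 : 0 ≤ y ^ (2 * k) := Real.rpow_nonneg (le_of_lt hy) _
    simp only [hT']
    positivity
  have hrel : ∀ y > 0, y ^ (2 * k) * p y ^ (1 + 1 / k) =
      τ * T' y * (T y ^ (2 * k) * GG ξ (T y) ^ (-(2 * k + 2))) := by
    intro y hy
    have h1 := hTpos y hy
    have h2 := hGp y hy
    have h3 : 0 < T y ^ (2 * k) * GG ξ (T y) ^ (-(2 * k + 2)) := by positivity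
    simp only [hT']
    field_simp
  have hTd' : ∀ y ∈ Ioi (0:ℝ), HasDerivWithinAt T (T' y) (Ioi 0) y := fun y hy =>
    (hTd y hy).hasDerivWithinAt
  have cT : ContinuousOn T (Ioi 0) := fun y hy => (hTd' y hy).continuousWithinAt
  have hinj : InjOn T (Ioi 0) := hTmono.injOn
  -- integrability of the derivative
  have iT' : IntegrableOn T' (Ioi 0) := by
    have h := (integrableOn_image_iff_integrableOn_abs_deriv_smul measurableSet_Ioi hTd' hinj
      (fun _ => (1:ℝ))).1 (by rw [hTimg]; simp)
    refine h.congr_fun (fun y hy => ?_) measurableSet_Ioi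
    simp [abs_of_nonneg (hT'0 y hy)]
  have hptG : ∀ y > 0, τ * (|T' y| • (T y ^ (2 * k) * GG ξ (T y) ^ (-(2 * k + 1)))) =
      GG ξ (T y) * (y ^ (2 * k) * p y ^ (1 + 1 / k)) := by
    intro y hy
    have h2 := hGp y hy
    have e : GG ξ (T y) ^ (-(2 * k + 1)) = GG ξ (T y) ^ (-(2 * k + 2)) * GG ξ (T y) := by
      rw [← Real.rpow_add_one h2.ne']; congr 1; ring
    rw [abs_of_nonneg (hT'0 y hy), hrel y hy, e, smul_eq_mul]; ring
  have iQ : IntegrableOn (fun y => GG ξ (T y) * (y ^ (2 * k) * p y ^ (1 + 1 / k))) (Ioi 0) := by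
    have h := (integrableOn_image_iff_integrableOn_abs_deriv_smul measurableSet_Ioi hTd' hinj
      (fun η => η ^ (2 * k) * GG ξ η ^ (-(2 * k + 1)))).1 (by
        rw [hTimg]; exact ((cG _).integrableOn_Icc).mono_set Ioo_subset_Icc_self)
    refine IntegrableOn.congr_fun (h.const_mul τ) (fun y hy => ?_) measurableSet_Ioi
    exact hptG y hy
  have hQ : ∫ y in Ioi 0, GG ξ (T y) * (y ^ (2 * k) * p y ^ (1 + 1 / k)) =
      τ * ∫ η in (0:ℝ)..R, η ^ (2 * k) * GG ξ η ^ (-(2 * k + 1)) := by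
    have h := integral_image_eq_integral_abs_deriv_smul measurableSet_Ioi hTd' hinj
      (fun η => η ^ (2 * k) * GG ξ η ^ (-(2 * k + 1)))
    rw [hTimg] at h
    rw [intervalIntegral.integral_of_le hR.le, integral_Ioc_eq_integral_Ioo, h,
      ← integral_const_mul]
    refine setIntegral_congr_fun measurableSet_Ioi (fun y hy => ?_)
    exact (hptG y hy).symm
  -- integration by parts
  have hC0 : 0 ≤ C := by
    have h1 := hbp' 1 one_pos
    have h2 : 0 < GG x 1 ^ (-(2 * k + 1)) := Real.rpow_pos_of_pos (GG_pos x zero_le_one) _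
    have h3 := (abs_nonneg _).trans h1
    by_contra hcon
    have := mul_neg_of_neg_of_pos (not_le.1 hcon) h2
    linarith
  have hGle1 : ∀ y > 0, GG x y ^ (-(2 * k + 1)) ≤ 1 := fun y hy =>
    Real.rpow_le_one_of_one_le_of_nonpos (GG_ge_one x (le_of_lt hy)) (by linarith)
  set v' : ℝ → ℝ := fun y => 2 * k * y ^ (2 * k - 1) * (T y + 1) + y ^ (2 * k) * T' y with hv'
  have hvd : ∀ y ∈ Ioi (0:ℝ), HasDerivAt (fun y => y ^ (2 * k) * (T y + 1)) (v' y) y := by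
    intro y hy
    have h1 : HasDerivAt (fun y : ℝ => y ^ (2 * k)) (2 * k * y ^ (2 * k - 1)) y :=
      Real.hasDerivAt_rpow_const (Or.inl (ne_of_gt hy))
    exact h1.mul ((hTd y hy).add_const 1)
  have hTb : ∀ y > 0, |T y + 1| ≤ R + 1 := by
    intro y hy
    rw [abs_of_pos (by linarith [hTpos y hy])]; linarith [hTlt y hy]
  have i1 : IntegrableOn (fun y => uy y * (y ^ (2 * k) * (T y + 1))) (Ioi 0) := by
    have : IntegrableOn (fun y => (y ^ (2 * k) * uy y) * (T y + 1)) (Ioi 0) := by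
      refine Integrable.mul_bdd (c := R + 1) iuy ?_ ?_
      · exact (cT.add continuousOn_const).aestronglyMeasurable measurableSet_Ioi
      · filter_upwards [ae_restrict_mem measurableSet_Ioi] with y hy
        exact hTb y hy
    refine this.congr_fun (fun y _ => ?_) measurableSet_Ioi
    ring
  have i2 : IntegrableOn (fun y => p y ^ (1 + 1 / (2 * k)) * (2 * k * y ^ (2 * k - 1) * (T y + 1)))
      (Ioi 0) := by
    have : IntegrableOn (fun y => (2 * k * (y ^ (2 * k - 1) * p y ^ (1 + 1 / (2 * k)))) * (T y + 1))
        (Ioi 0) := by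
      refine Integrable.mul_bdd (c := R + 1) (iY.const_mul _) ?_ ?_
      · exact (cT.add continuousOn_const).aestronglyMeasurable measurableSet_Ioi
      · filter_upwards [ae_restrict_mem measurableSet_Ioi] with y hy
        exact hTb y hy
    refine this.congr_fun (fun y _ => ?_) measurableSet_Ioi
    ring
  obtain ⟨gx, gy, -, -, -, -, -, -, g3, g3', g4, g4', g5⟩ := dom_exists (s := 2 * k) (by linarith) hd1
  have hWb : ∀ y > 0, |y ^ (2 * k) * p y ^ (1 + 1 / (2 * k))| ≤ C := by
    intro y hy
    refine (hbd (2 * k) _ hbr' y hy).trans ?_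
    have h1 := g5 x y hy
    have h2 : gx x * gy y ≤ 1 := mul_le_one₀ (g3' x) (g4 y hy) (g4' y hy)
    nlinarith
  have i3 : IntegrableOn (fun y => p y ^ (1 + 1 / (2 * k)) * (y ^ (2 * k) * T' y)) (Ioi 0) := by
    have : IntegrableOn (fun y => T' y * (y ^ (2 * k) * p y ^ (1 + 1 / (2 * k)))) (Ioi 0) := by
      refine Integrable.mul_bdd (c := C) iT' ?_ ?_
      · exact ((cy _).mul cpr).aestronglyMeasurable measurableSet_Ioi
      · filter_upwards [ae_restrict_mem measurableSet_Ioi] with y hy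
        exact hWb y hy
    refine this.congr_fun (fun y _ => ?_) measurableSet_Ioi
    ring
  have ihd : IntegrableOn (fun y => uy y * (y ^ (2 * k) * (T y + 1)) +
      p y ^ (1 + 1 / (2 * k)) * v' y) (Ioi 0) := by
    refine (i1.add (i2.add i3)).congr_fun (fun y _ => ?_) measurableSet_Ioi
    simp only [hv', Pi.add_apply]; ring
  have hparts : ∫ y in Ioi 0, (uy y * (y ^ (2 * k) * (T y + 1)) +
      p y ^ (1 + 1 / (2 * k)) * v' y) = 0 := by
    have hz := integral_Ioi_deriv_mul_eq_sub (a := (0:ℝ)) (a' := (0:ℝ)) (b' := (0:ℝ))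
      (u := fun y => p y ^ (1 + 1 / (2 * k))) (v := fun y => y ^ (2 * k) * (T y + 1))
      (u' := uy) (v' := v') (fun y hy => hder y hy) hvd ihd ?_ ?_
    · rw [hz]; ring
    · have hl : Tendsto (fun y : ℝ => C * (R + 1) * y ^ (2 * k)) (𝓝[>] 0) (𝓝 0) := by
        have : Tendsto (fun y : ℝ => C * (R + 1) * y ^ (2 * k)) (𝓝 0) (𝓝 (C * (R + 1) * 0 ^ (2 * k))) :=
          ((Real.continuousAt_rpow_const _ _ (Or.inr (by linarith))).const_mul _ |>.tendsto)
        rw [Real.zero_rpow (by linarith), mul_zero] at this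
        exact this.mono_left nhdsWithin_le_nhds
      refine squeeze_zero_norm' ?_ hl
      filter_upwards [self_mem_nhdsWithin] with y hy
      have hy0 : 0 < y := hy
      have h1 : |p y ^ (1 + 1 / (2 * k))| ≤ C :=
        (hbr' y hy).trans (mul_le_of_le_one_right hC0 (hGle1 y hy))
      have h2 := hTb y hy
      have h3 : 0 ≤ y ^ (2 * k) := by positivity
      simp only [Pi.mul_apply, Real.norm_eq_abs, abs_mul, abs_of_nonneg h3]
      calc |p y ^ (1 + 1 / (2 * k))| * (y ^ (2 * k) * |T y + 1|) ≤ C * (y ^ (2 * k) * (R + 1)) := by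
            gcongr
        _ = _ := by ring
    · refine dom_lim (s := 2 * k) (t := 2 * k + 1) (C := C * (R + 1)) (by linarith) hd1 x ?_
      intro y hy
      have h1 := hbd (2 * k) _ hbr' y hy
      have h2 := hTb y hy
      have h3 : (fun y => p y ^ (1 + 1 / (2 * k))) y * (fun y => y ^ (2 * k) * (T y + 1)) y =
        (y ^ (2 * k) * p y ^ (1 + 1 / (2 * k))) * (T y + 1) := by ring
      rw [Pi.mul_apply, h3, abs_mul]
      calc |y ^ (2 * k) * p y ^ (1 + 1 / (2 * k))| * |T y + 1| ≤
          (C * (y ^ (2 * k) * GG x y ^ (-(2 * k + 1)))) * (R + 1) :=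
            mul_le_mul h1 h2 (abs_nonneg _) ((abs_nonneg _).trans h1)
        _ = _ := by ring
  -- pointwise inequality
  have hpt : ∀ y ∈ Ioi (0:ℝ), (2 * k + 2) * (GG ξ (T y) * (y ^ (2 * k) * p y ^ (1 + 1 / k)))
      + 2 * k * (y ^ (2 * k - 1) * p y ^ (1 + 1 / (2 * k))) ≤
      τ * (y ^ (2 * k) * p y ^ (1 + 1 / (2 * k))) + ξ * (y ^ (2 * k) * ux y)
      + (2 + 1 / k) / 2 * (θ * (y ^ (2 * k) * V y)
        + (GG ξ (T y) * (y ^ (2 * k) * p y ^ (1 + 1 / k))) / θ)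
      + (uy y * (y ^ (2 * k) * (T y + 1)) + p y ^ (1 + 1 / (2 * k)) * v' y) := by
    intro y hy
    have hy0 : 0 < y := hy
    have h1 := amgm_point hk (hp0 y hy) hy0 (hGp y hy) hτ.le (hT'0 y hy) (hTpos y hy).le (hrel y hy)
    have h2 := mul_le_mul_of_nonneg_left (hH y hy ξ (T y + 1)) (Real.rpow_nonneg hy0.le (2 * k))
    have e1 : y ^ (2 * k) * ((2 + 1 / k) / 2 * (θ * V y + p y ^ (1 + 1 / k) * (ξ ^ 2 + (T y + 1) ^ 2) / θ))
      = (2 + 1 / k) / 2 * (θ * (y ^ (2 * k) * V y)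
        + (GG ξ (T y) * (y ^ (2 * k) * p y ^ (1 + 1 / k))) / θ) := by
      unfold GG; ring
    rw [e1] at h2
    simp only [hv']
    nlinarith [h1, h2]
  have hfin := setIntegral_mono_on ((iQ.const_mul (2 * k + 2)).add (iY.const_mul (2 * k)))
    ((((iW.const_mul τ).add (iux.const_mul ξ)).add
      (((iV.const_mul θ).add (iQ.div_const θ)).const_mul ((2 + 1 / k) / 2))).add ihd)
    measurableSet_Ioi hpt
  have e1 := integral_add (iQ.const_mul (2 * k + 2)) (iY.const_mul (2 * k))
  have e2 := integral_add (((iW.const_mul τ).add (iux.const_mul ξ)).add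
      (((iV.const_mul θ).add (iQ.div_const θ)).const_mul ((2 + 1 / k) / 2))) ihd
  have e3 := integral_add ((iW.const_mul τ).add (iux.const_mul ξ))
      (((iV.const_mul θ).add (iQ.div_const θ)).const_mul ((2 + 1 / k) / 2))
  have e4 := integral_add (iW.const_mul τ) (iux.const_mul ξ)
  have e5 := integral_add (iV.const_mul θ) (iQ.div_const θ)
  simp only [Pi.add_apply, integral_const_mul, integral_div] at e1 e2 e3 e4 e5 hfin
  rw [e1, e2, e3, e4, e5, hparts, hQ] at hfin
  linarith

open MeasureTheory Metric

open Set Filter Topology in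
lemma nK_cont {k R t : ℝ} (hk : 1 < k) (hR : 0 < R) :
    Continuous (fun ξ => ∫ η in (0:ℝ)..R, η ^ (2 * k) * GG ξ η ^ (-t)) := by
  have h1 : Continuous (fun ξ => ∫ η in (0:ℝ)..R, |η| ^ (2 * k) * GG ξ |η| ^ (-t)) := by
    apply intervalIntegral.continuous_parametric_intervalIntegral_of_continuous' 
    apply Continuous.mul
    · exact Continuous.rpow_const (by fun_prop) (fun _ => Or.inr (by linarith))
    · refine Continuous.rpow_const ?_ (fun p => Or.inl (GG_pos _ (abs_nonneg _)).ne')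
      unfold GG; fun_prop
  refine h1.congr (fun ξ => ?_)
  apply intervalIntegral.integral_congr
  intro η hη
  rw [uIcc_of_le hR.le] at hη
  simp only [abs_of_nonneg hη.1]

open Set Filter Topology in
lemma nK_pos {k R t ξ : ℝ} (hk : 1 < k) (hR : 0 < R) :
    0 < ∫ η in (0:ℝ)..R, η ^ (2 * k) * GG ξ η ^ (-t) := by
  apply intervalIntegral.intervalIntegral_pos_of_pos_on
  · apply ContinuousOn.intervalIntegrable
    rw [uIcc_of_le hR.le]
    apply ContinuousOn.mul
    · exact continuousOn_id.rpow_const (fun y _ => Or.inr (by linarith))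
    · refine ContinuousOn.rpow_const ?_ (fun y hy => Or.inl (GG_pos ξ hy.1).ne')
      exact (GG_cont.comp (Continuous.prodMk_right ξ)).continuousOn
  · intro y hy
    have h1 : 0 < y := hy.1
    have := GG_pos ξ h1.le
    positivity
  · exact hR

open Set Filter Topology in
/-- Facts on `x ↦ ∫ y^s F(x,y) dy`. -/
lemma slice_facts {s t C : ℝ} (hs : 0 ≤ s) (ht : s / 2 + 1 < t) {F : ℝ → ℝ → ℝ}
    (hF : ContinuousOn (fun p : ℝ × ℝ => F p.1 p.2) (univ ×ˢ Ioi 0))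
    (hb : ∀ x, ∀ y > 0, |F x y| ≤ C * GG x y ^ (-t)) :
    Continuous (fun x => ∫ y in Ioi 0, y ^ s * F x y) ∧
    Integrable (fun x => ∫ y in Ioi 0, y ^ s * F x y) ∧
    Tendsto (fun x => ∫ y in Ioi 0, y ^ s * F x y) atTop (𝓝 0) ∧
    Tendsto (fun x => ∫ y in Ioi 0, y ^ s * F x y) atBot (𝓝 0) ∧
    (∃ B, ∀ x, |∫ y in Ioi 0, y ^ s * F x y| ≤ B) ∧
    (∃ g : ℝ → ℝ, IntegrableOn g (Ioi 0) ∧ ∀ x, ∀ y > 0, |y ^ s * F x y| ≤ g y) ∧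
    (∀ x, IntegrableOn (fun y => y ^ s * F x y) (Ioi 0)) ∧
    Integrable (fun p : ℝ × ℝ => p.2 ^ s * F p.1 p.2) muH := by
  obtain ⟨gx, gy, h1, h2, h6, h7, h8, -, h3, h3', h4, h4', h5⟩ := dom_exists hs ht
  have cy : ContinuousOn (fun p : ℝ × ℝ => p.2 ^ s) (univ ×ˢ Ioi 0) := by
    refine continuousOn_snd.rpow_const (fun p _ => Or.inr hs)
  have hb' : ∀ x, ∀ y > 0, |y ^ s * F x y| ≤ C * (y ^ s * GG x y ^ (-t)) := by
    intro x y hy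
    have : 0 ≤ y ^ s := Real.rpow_nonneg (le_of_lt hy) s
    rw [abs_mul, abs_of_nonneg this]
    nlinarith [mul_le_mul_of_nonneg_left (hb x y hy) this]
  have hIntg : Integrable (fun p : ℝ × ℝ => p.2 ^ s * F p.1 p.2) muH :=
    dom_prod (F := fun x y => y ^ s * F x y) hs ht (cy.mul hF) hb'
  have hsl : ∀ x, ContinuousOn (fun y => y ^ s * F x y) (Ioi 0) := by
    intro x
    exact (cy.mul hF).comp (f := fun y : ℝ => (x, y)) (by fun_prop) (fun y hy => ⟨trivial, hy⟩)
  have hb2 : ∀ x, ∀ y > 0, |y ^ s * F x y| ≤ |C| * (gx x * gy y) := by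
    intro x y hy
    refine (hb' x y hy).trans ?_
    have hG := GG_pos x (le_of_lt hy)
    have : 0 ≤ y ^ s := Real.rpow_nonneg (le_of_lt hy) s
    calc C * (y ^ s * GG x y ^ (-t)) ≤ |C| * (y ^ s * GG x y ^ (-t)) := by
          gcongr; exact le_abs_self C
      _ ≤ _ := mul_le_mul_of_nonneg_left (h5 _ _ hy) (abs_nonneg C)
  have hb3 : ∀ x, ∀ y > 0, |y ^ s * F x y| ≤ |C| * gy y := by
    intro x y hy
    refine (hb2 x y hy).trans ?_
    exact mul_le_mul_of_nonneg_left (mul_le_of_le_one_left (h4 y hy) (h3' x)) (abs_nonneg C)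
  have hb4 : ∀ x, |∫ y in Ioi 0, y ^ s * F x y| ≤ (|C| * ∫ y in Ioi 0, gy y) * gx x := by
    intro x
    have : (|C| * ∫ y in Ioi 0, gy y) * gx x = ∫ y in Ioi 0, |C| * (gx x * gy y) := by
      rw [integral_const_mul, integral_const_mul]; ring
    rw [this, ← Real.norm_eq_abs]
    refine norm_integral_le_of_norm_le ((h2.const_mul _).const_mul _) ?_
    filter_upwards [ae_restrict_mem measurableSet_Ioi] with y hy
    exact hb2 x y hy
  refine ⟨?_, hIntg.integral_prod_left, ?_, ?_, ⟨|C| * ∫ y in Ioi 0, gy y, fun x => ?_⟩, ⟨_, h2.const_mul |C|, hb3⟩, ?_, hIntg⟩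
  · refine continuous_of_dominated (bound := fun y => |C| * gy y) ?_ ?_ (h2.const_mul _) ?_
    · intro x; exact (hsl x).aestronglyMeasurable measurableSet_Ioi
    · intro x
      filter_upwards [ae_restrict_mem measurableSet_Ioi] with y hy
      exact hb3 x y hy
    · filter_upwards [ae_restrict_mem measurableSet_Ioi] with y hy
      rw [← continuousOn_univ]
      exact (cy.mul hF).comp (f := fun x : ℝ => (x, y)) (by fun_prop) (fun x _ => ⟨trivial, hy⟩)
  · refine squeeze_zero_norm (fun x => hb4 x) ?_
    simpa using h8.const_mul (|C| * ∫ y in Ioi 0, gy y)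
  · refine squeeze_zero_norm (fun x => hb4 x) ?_
    simpa using h7.const_mul (|C| * ∫ y in Ioi 0, gy y)
  · refine (hb4 x).trans (mul_le_of_le_one_right ?_ (h3' x))
    exact mul_nonneg (abs_nonneg _) (setIntegral_nonneg measurableSet_Ioi h4)
  · intro x
    exact dom_y hs ht x (hsl x) (hb' x)

open Set Filter Topology in
lemma core_ineq {k R C θ : ℝ} (hk : 1 < k) (hR : 0 < R)
    {P Ux Uy V : ℝ → ℝ → ℝ} (hp0 : ∀ x, ∀ y > 0, 0 ≤ P x y)
    (hPc : ContinuousOn (fun p : ℝ × ℝ => P p.1 p.2) (univ ×ˢ Ioi 0))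
    (hUxc : ContinuousOn (fun p : ℝ × ℝ => Ux p.1 p.2) (univ ×ˢ Ioi 0))
    (hUyc : ContinuousOn (fun p : ℝ × ℝ => Uy p.1 p.2) (univ ×ˢ Ioi 0))
    (hVc : ContinuousOn (fun p : ℝ × ℝ => V p.1 p.2) (univ ×ˢ Ioi 0))
    (hdx : ∀ x, ∀ y > 0, HasDerivAt (fun x => P x y ^ (1 + 1 / (2 * k))) (Ux x y) x)
    (hdy : ∀ x, ∀ y > 0, HasDerivAt (fun y => P x y ^ (1 + 1 / (2 * k))) (Uy x y) y)
    (hbr : ∀ x, ∀ y > 0, P x y ^ (1 + 1 / (2 * k)) ≤ C * GG x y ^ (-(2 * k + 1)))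
    (hbp : ∀ x, ∀ y > 0, P x y ^ (1 + 1 / k) ≤ C * GG x y ^ (-(2 * k + 1)))
    (hbux : ∀ x, ∀ y > 0, |Ux x y| ≤ C * GG x y ^ (-(2 * k + 1)))
    (hbuy : ∀ x, ∀ y > 0, |Uy x y| ≤ C * GG x y ^ (-(2 * k + 1)))
    (hbV : ∀ x, ∀ y > 0, |V x y| ≤ C * GG x y ^ (-(2 * k + 1)))
    (hnv : ∀ x, ∀ u > 0, ∀ v > u, ∃ c ∈ Icc u v, 0 < P x c)
    (hH : ∀ x, ∀ y > 0, ∀ a b : ℝ, -(Ux x y * a + Uy x y * b) ≤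
      (2 + 1 / k) / 2 * (θ * V x y + P x y ^ (1 + 1 / k) * (a ^ 2 + b ^ 2) / θ))
    (hmass : ∫ x, ∫ y in Ioi 0, y ^ (2 * k) * P x y ^ (1 + 1 / k) =
      ∫ ξ in (-R)..R, ∫ η in (0:ℝ)..R, η ^ (2 * k) * GG ξ η ^ (-(2 * k + 2))) :
    (2 * k + 2) * (∫ ξ in (-R)..R, ∫ η in (0:ℝ)..R, η ^ (2 * k) * GG ξ η ^ (-(2 * k + 1)))
      + 2 * k * ∫ x, ∫ y in Ioi 0, y ^ (2 * k - 1) * P x y ^ (1 + 1 / (2 * k)) ≤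
    (2 + 1 / k) / 2 * (θ * (∫ x, ∫ y in Ioi 0, y ^ (2 * k) * V x y)
        + (∫ ξ in (-R)..R, ∫ η in (0:ℝ)..R, η ^ (2 * k) * GG ξ η ^ (-(2 * k + 1))) / θ) := by
  have hk0 : 0 < k := by linarith
  have hd1 : 2 * k / 2 + 1 < 2 * k + 1 := by linarith
  have hd2 : (2 * k - 1) / 2 + 1 < 2 * k + 1 := by linarith
  have h2k : 0 ≤ 2 * k := by linarith
  have h2k1 : 0 ≤ 2 * k - 1 := by linarith
  have hrk : (0:ℝ) ≤ 1 + 1 / k := by positivity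
  have hrk2 : (0:ℝ) ≤ 1 + 1 / (2 * k) := by positivity
  have hbr' : ∀ x, ∀ y > 0, |P x y ^ (1 + 1 / (2 * k))| ≤ C * GG x y ^ (-(2 * k + 1)) := fun x y hy => by
    rw [abs_of_nonneg (Real.rpow_nonneg (hp0 x y hy) _)]; exact hbr x y hy
  have hbp' : ∀ x, ∀ y > 0, |P x y ^ (1 + 1 / k)| ≤ C * GG x y ^ (-(2 * k + 1)) := fun x y hy => by
    rw [abs_of_nonneg (Real.rpow_nonneg (hp0 x y hy) _)]; exact hbp x y hy
  have cpr : ContinuousOn (fun p : ℝ × ℝ => P p.1 p.2 ^ (1 + 1 / (2 * k))) (univ ×ˢ Ioi 0) :=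
    hPc.rpow_const (fun y _ => Or.inr hrk2)
  have cpk : ContinuousOn (fun p : ℝ × ℝ => P p.1 p.2 ^ (1 + 1 / k)) (univ ×ˢ Ioi 0) :=
    hPc.rpow_const (fun y _ => Or.inr hrk)
  obtain ⟨mc, mi, -, -, -, -, msl, -⟩ := slice_facts (F := fun x y => P x y ^ (1 + 1 / k)) h2k hd1 cpk hbp'
  obtain ⟨Wc, Wi, Wt, Wb, ⟨WB, WbB⟩, -, Wsl, -⟩ :=
    slice_facts (F := fun x y => P x y ^ (1 + 1 / (2 * k))) h2k hd1 cpr hbr'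
  obtain ⟨-, Yi, -, -, -, -, -, -⟩ :=
    slice_facts (F := fun x y => P x y ^ (1 + 1 / (2 * k))) h2k1 hd2 cpr hbr'
  obtain ⟨-, W'i, -, -, -, ⟨gU, gUi, gUb⟩, W'sl, -⟩ := slice_facts (F := Ux) h2k hd1 hUxc hbux
  obtain ⟨-, Vi, -, -, -, -, -, -⟩ := slice_facts (F := V) h2k hd1 hVc hbV
  set m := fun x => ∫ y in Ioi 0, y ^ (2 * k) * P x y ^ (1 + 1 / k) with hm
  set W := fun x => ∫ y in Ioi 0, y ^ (2 * k) * P x y ^ (1 + 1 / (2 * k)) with hW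
  set W' := fun x => ∫ y in Ioi 0, y ^ (2 * k) * Ux x y with hW'
  set Y := fun x => ∫ y in Ioi 0, y ^ (2 * k - 1) * P x y ^ (1 + 1 / (2 * k)) with hY
  set X := fun x => ∫ y in Ioi 0, y ^ (2 * k) * V x y with hX
  set n := fun ξ => ∫ η in (0:ℝ)..R, η ^ (2 * k) * GG ξ η ^ (-(2 * k + 2)) with hn
  set K := fun ξ => ∫ η in (0:ℝ)..R, η ^ (2 * k) * GG ξ η ^ (-(2 * k + 1)) with hK
  have hsl : ∀ {F : ℝ → ℝ → ℝ}, ContinuousOn (fun p : ℝ × ℝ => F p.1 p.2) (univ ×ˢ Ioi 0) →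
      ∀ x, ContinuousOn (F x) (Ioi 0) := by
    intro F hF x
    exact hF.comp (f := fun y : ℝ => (x, y)) (by fun_prop) (fun y hy => ⟨trivial, hy⟩)
  have mpos : ∀ x, 0 < m x := by
    intro x
    have hnn : ∀ y > 0, 0 ≤ y ^ (2 * k) * P x y ^ (1 + 1 / k) := fun y hy =>
      mul_nonneg (Real.rpow_nonneg (le_of_lt hy) _) (Real.rpow_nonneg (hp0 x y hy) _)
    have h1 : 0 < ∫ y in (1:ℝ)..2, y ^ (2 * k) * P x y ^ (1 + 1 / k) := by
      refine intervalIntegral.integral_pos one_lt_two ?_ ?_ ?_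
      · refine ContinuousOn.mul (continuousOn_id.rpow_const (fun _ _ => Or.inr h2k)) ?_
        exact (hsl (F := fun x y => P x y ^ (1 + 1 / k)) cpk x).mono (fun y hy => lt_of_lt_of_le one_pos hy.1)
      · intro y hy; exact hnn y (lt_trans one_pos hy.1)
      · obtain ⟨c, hc, hcp⟩ := hnv x 1 one_pos 2 one_lt_two
        have : 0 < c := lt_of_lt_of_le one_pos hc.1
        exact ⟨c, hc, by positivity⟩
    refine h1.trans_le ?_
    rw [intervalIntegral.integral_of_le one_le_two]
    refine setIntegral_mono_set (msl x) ?_ ?_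
    · filter_upwards [ae_restrict_mem measurableSet_Ioi] with y hy
      exact hnn y hy
    · exact HasSubset.Subset.eventuallyLE (show Ioc (1:ℝ) 2 ⊆ Ioi 0 from fun y hy => lt_trans one_pos hy.1)
  have nc : Continuous n := nK_cont hk hR
  have Kc : Continuous K := nK_cont hk hR
  have npos : ∀ ξ, 0 < n ξ := fun ξ => nK_pos hk hR
  obtain ⟨T, hTm, hTmono, hTimg, hTd⟩ := transport_exists (S := univ) isOpen_univ ordConnected_univ
    (a := m) (b := n) mc.continuousOn (fun x _ => (mpos x).le) mi.integrableOn
    (fun u _ v _ huv => ⟨u, ⟨le_rfl, huv.le⟩, mpos u⟩)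
    (c := -R) (d := R) (by linarith) nc.continuousOn (fun t _ => npos t) (l := 1) one_pos
    (by rw [setIntegral_univ, one_mul]; exact hmass)
  set τ : ℝ → ℝ := fun x => m x / (1 * n (T x)) with hτ
  have hτpos : ∀ x, 0 < τ x := fun x => by
    have h1 := mpos x
    have h2 := npos (T x)
    simp only [hτ]; positivity
  have hTd0 : ∀ x, HasDerivAt T (τ x) x := fun x => hTd x trivial
  have hTd' : ∀ x ∈ (univ : Set ℝ), HasDerivWithinAt T (τ x) univ x := fun x _ =>
    (hTd0 x).hasDerivWithinAt
  have cT : Continuous T := continuous_iff_continuousAt.2 fun x => (hTd0 x).continuousAt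
  have hTb : ∀ x, |T x| ≤ R := fun x => abs_le.2 ⟨(hTm x trivial).1.le, (hTm x trivial).2.le⟩
  have iτ : Integrable τ := by
    have h := (integrableOn_image_iff_integrableOn_abs_deriv_smul MeasurableSet.univ hTd' hTmono.injOn
      (fun _ => (1:ℝ))).1 (by rw [hTimg]; simp)
    rw [integrableOn_univ] at h
    refine h.congr (Eventually.of_forall fun x => ?_)
    simp [abs_of_pos (hτpos x)]
  have iQ : Integrable (fun x => τ x * K (T x)) := by
    have h := (integrableOn_image_iff_integrableOn_abs_deriv_smul MeasurableSet.univ hTd' hTmono.injOn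
      K).1 (by rw [hTimg]; exact Kc.continuousOn.integrableOn_Icc.mono_set Ioo_subset_Icc_self)
    rw [integrableOn_univ] at h
    refine h.congr (Eventually.of_forall fun x => ?_)
    simp [abs_of_pos (hτpos x)]
  have hQ : ∫ x, τ x * K (T x) = ∫ ξ in (-R)..R, K ξ := by
    have h := integral_image_eq_integral_abs_deriv_smul MeasurableSet.univ hTd' hTmono.injOn K
    rw [hTimg] at h
    rw [intervalIntegral.integral_of_le (by linarith), integral_Ioc_eq_integral_Ioo, h, setIntegral_univ]
    refine integral_congr_ae (Eventually.of_forall fun x => ?_)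
    simp [abs_of_pos (hτpos x)]
  have hWd : ∀ x, HasDerivAt W (W' x) x := by
    intro x
    have := hasDerivAt_integral_of_dominated_loc_of_deriv_le (μ := volume.restrict (Ioi (0:ℝ)))
      (F := fun x y => y ^ (2 * k) * P x y ^ (1 + 1 / (2 * k)))
      (F' := fun x y => y ^ (2 * k) * Ux x y) (x₀ := x) (s := univ) (bound := gU) univ_mem
      (Eventually.of_forall fun x => (Wsl x).aestronglyMeasurable) (Wsl x)
      (W'sl x).aestronglyMeasurable ?_ gUi ?_
    · exact this.2
    · filter_upwards [ae_restrict_mem measurableSet_Ioi] with y hy x _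
      exact gUb x y hy
    · filter_upwards [ae_restrict_mem measurableSet_Ioi] with y hy x _
      exact (hdx x y hy).const_mul _
  have iTW : Integrable (fun x => τ x * W x + T x * W' x) := by
    refine Integrable.add ?_ ?_
    · exact iτ.mul_bdd (c := WB) Wc.aestronglyMeasurable (Eventually.of_forall WbB)
    · exact W'i.bdd_mul (c := R) cT.aestronglyMeasurable (Eventually.of_forall hTb)
  have hTW : ∫ x, (τ x * W x + T x * W' x) = 0 := by
    have hlim : ∀ l : Filter ℝ, Tendsto W l (𝓝 0) → Tendsto (fun x => T x * W x) l (𝓝 0) := by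
      intro l hl
      refine squeeze_zero_norm (a := fun x => R * |W x|) (fun x => ?_) ?_
      · rw [Real.norm_eq_abs, abs_mul]
        exact mul_le_mul_of_nonneg_right (hTb x) (abs_nonneg _)
      · simpa using hl.abs.const_mul R
    have := integral_of_hasDerivAt_of_tendsto (f := fun x => T x * W x)
      (f' := fun x => τ x * W x + T x * W' x) (fun x => (hTd0 x).mul (hWd x)) iTW
      (hlim _ Wb) (hlim _ Wt)
    rw [this]; ring
  have hpt : ∀ x, (2 * k + 2) * (τ x * K (T x)) + 2 * k * Y x ≤
      (τ x * W x + T x * W' x) + (2 + 1 / k) / 2 * (θ * X x + (τ x * K (T x)) / θ) := by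
    intro x
    exact core_slice hk hR (hτpos x) (x := x) (hp0 x) (hsl hPc x) (hsl hUxc x) (hsl hUyc x) (hsl hVc x)
      (hdy x) (hbr x) (hbp x) (hbux x) (hbuy x) (hbV x) (hnv x) (hH x) (by
        show m x = τ x * n (T x)
        have := npos (T x)
        simp only [hτ]; field_simp)
  have hfin := integral_mono ((iQ.const_mul (2 * k + 2)).add (Yi.const_mul (2 * k)))
    (iTW.add (((Vi.const_mul θ).add (iQ.div_const θ)).const_mul ((2 + 1 / k) / 2))) hpt
  have e1 := integral_add (iQ.const_mul (2 * k + 2)) (Yi.const_mul (2 * k))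
  have e2 := integral_add iTW (((Vi.const_mul θ).add (iQ.div_const θ)).const_mul ((2 + 1 / k) / 2))
  have e5 := integral_add (Vi.const_mul θ) (iQ.div_const θ)
  simp only [Pi.add_apply, integral_const_mul, integral_div] at e1 e2 e5 hfin
  rw [e1, e2, e5, hTW, hQ] at hfin
  linarith

open MeasureTheory Metric

/-- The point `x + i y`. -/
noncomputable def zz (x y : ℝ) : ℂ := (x : ℂ) + (y : ℂ) * Complex.I

lemma zz_im (x y : ℝ) : (zz x y).im = y := by simp [zz]

lemma zz_re (x y : ℝ) : (zz x y).re = x := by simp [zz]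

lemma zz_cont : Continuous (fun p : ℝ × ℝ => zz p.1 p.2) := by
  unfold zz; fun_prop

lemma zz_dx (x y : ℝ) : HasDerivAt (fun x => zz x y) 1 x := by
  have := ((hasDerivAt_id x).ofReal_comp).add_const ((y : ℂ) * Complex.I)
  simpa [zz] using this

lemma zz_dy (x y : ℝ) : HasDerivAt (fun y => zz x y) Complex.I y := by
  have := (((hasDerivAt_id y).ofReal_comp).mul_const Complex.I).const_add (x : ℂ)
  simpa [zz] using this

/-- Admissible functions on the half plane. -/
structure Adm (k C : ℝ) (Ψ Ψ1 : ℂ → ℂ) : Prop where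
  hC : 1 ≤ C
  d : ∀ z : ℂ, 0 < z.im → HasDerivAt Ψ (Ψ1 z) z
  c1 : ContinuousOn Ψ1 {z : ℂ | 0 < z.im}
  b0 : ∀ x, ∀ y > 0, ‖Ψ (zz x y)‖ ≤ C * GG x y ^ (-k)
  b1 : ∀ x, ∀ y > 0, ‖Ψ1 (zz x y)‖ ≤ C * GG x y ^ (-(k + 1 / 2))

open Set in
lemma cont_zz {g : ℂ → ℂ} (hg : ContinuousOn g {z : ℂ | 0 < z.im}) :
    ContinuousOn (fun p : ℝ × ℝ => g (zz p.1 p.2)) (univ ×ˢ Ioi 0) :=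
  hg.comp zz_cont.continuousOn (fun p hp => by simpa [zz_im] using hp.2)

lemma Adm.c0 {k C : ℝ} {Ψ Ψ1 : ℂ → ℂ} (h : Adm k C Ψ Ψ1) : ContinuousOn Ψ {z : ℂ | 0 < z.im} :=
  fun z hz => (h.d z hz).continuousAt.continuousWithinAt

open Set Filter Topology in
lemma core_psi {k R C θ : ℝ} (hk : 1 < k) (hR : 0 < R) (hθ : 0 < θ) {Ψ Ψ1 : ℂ → ℂ} (h : Adm k C Ψ Ψ1)
    (hnv : ∀ x, ∀ u > 0, ∀ v > u, ∃ c ∈ Icc u v, Ψ (zz x c) ≠ 0)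
    (hmass : ∫ x, ∫ y in Ioi 0, y ^ (2 * k) * (‖Ψ (zz x y)‖ ^ 2) ^ (1 + 1 / k) =
      ∫ ξ in (-R)..R, ∫ η in (0:ℝ)..R, η ^ (2 * k) * GG ξ η ^ (-(2 * k + 2))) :
    (2 * k + 2) * (∫ ξ in (-R)..R, ∫ η in (0:ℝ)..R, η ^ (2 * k) * GG ξ η ^ (-(2 * k + 1)))
      + 2 * k * ∫ x, ∫ y in Ioi 0, y ^ (2 * k - 1) * (‖Ψ (zz x y)‖ ^ 2) ^ (1 + 1 / (2 * k)) ≤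
    (2 + 1 / k) / 2 * (θ * (∫ x, ∫ y in Ioi 0, y ^ (2 * k) * ‖Ψ1 (zz x y)‖ ^ 2)
        + (∫ ξ in (-R)..R, ∫ η in (0:ℝ)..R, η ^ (2 * k) * GG ξ η ^ (-(2 * k + 1))) / θ) := by
  have hk0 : 0 < k := by linarith
  have hC := h.hC
  have hC0 : 0 < C := by linarith
  have hk1 : 1 / k ≤ 1 := by rw [div_le_one hk0]; exact hk.le
  have hk2 : 1 / (2 * k) ≤ 1 := by rw [div_le_one (by positivity)]; linarith
  have cΨ := cont_zz h.c0
  have cΨ1 := cont_zz h.c1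
  have cP : ContinuousOn (fun p : ℝ × ℝ => ‖Ψ (zz p.1 p.2)‖ ^ 2) (univ ×ˢ Ioi 0) := cΨ.norm.pow 2
  have cPr : ContinuousOn (fun p : ℝ × ℝ => (‖Ψ (zz p.1 p.2)‖ ^ 2) ^ (1 + 1 / (2 * k) - 1)) (univ ×ˢ Ioi 0) :=
    cP.rpow_const (fun _ _ => Or.inr (by simp; positivity))
  have hP : ∀ x, ∀ y > 0, ‖Ψ (zz x y)‖ ^ 2 ≤ C ^ 2 * GG x y ^ (-(2 * k)) := by
    intro x y hy
    have hG := GG_pos x (le_of_lt hy)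
    calc ‖Ψ (zz x y)‖ ^ 2 ≤ (C * GG x y ^ (-k)) ^ 2 := by gcongr; exact h.b0 x y hy
      _ = _ := by
        rw [mul_pow, ← Real.rpow_natCast (GG x y ^ (-k)), ← Real.rpow_mul hG.le]; congr 2; push_cast; ring
  -- powers of P
  have hPs : ∀ x, ∀ y > 0, ∀ s : ℝ, 0 ≤ s → s ≤ 2 → (‖Ψ (zz x y)‖ ^ 2) ^ s ≤ C ^ 4 * GG x y ^ (-(2 * k * s)) := by
    intro x y hy s hs hs2
    have hG := GG_pos x (le_of_lt hy)
    calc (‖Ψ (zz x y)‖ ^ 2) ^ s ≤ (C ^ 2 * GG x y ^ (-(2 * k))) ^ s := by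
          gcongr; exact hP x y hy
      _ = (C ^ 2) ^ s * GG x y ^ (-(2 * k * s)) := by
          rw [Real.mul_rpow (by positivity) (by positivity), ← Real.rpow_mul hG.le]; congr 2; ring
      _ ≤ (C ^ 2) ^ (2:ℝ) * GG x y ^ (-(2 * k * s)) := by
          gcongr
          nlinarith
      _ = _ := by rw [Real.rpow_two]; ring
  have hU : ∀ x, ∀ y > 0, ∀ v : ℂ, ‖v‖ ≤ ‖Ψ1 (zz x y)‖ →
      |2 * inner ℝ (Ψ (zz x y)) v * (1 + 1 / (2 * k)) * (‖Ψ (zz x y)‖ ^ 2) ^ (1 + 1 / (2 * k) - 1)|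
        ≤ 4 * C ^ 6 * GG x y ^ (-(2 * k + 1)) := by
    intro x y hy v hv
    have hG := GG_pos x (le_of_lt hy)
    have hG1 := GG_ge_one x (le_of_lt hy)
    have h1 : |inner ℝ (Ψ (zz x y)) v| ≤ (C * GG x y ^ (-k)) * (C * GG x y ^ (-(k + 1 / 2))) := by
      refine (abs_real_inner_le_norm _ _).trans ?_
      exact mul_le_mul (h.b0 x y hy) (hv.trans (h.b1 x y hy)) (norm_nonneg _) (by positivity)
    have h2 : (‖Ψ (zz x y)‖ ^ 2) ^ (1 + 1 / (2 * k) - 1) ≤ C ^ 4 * GG x y ^ (-(1:ℝ)) := by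
      have := hPs x y hy (1 + 1 / (2 * k) - 1) (by simp; positivity) (by linarith)
      refine this.trans (le_of_eq ?_)
      congr 3; field_simp; ring
    rw [abs_mul, abs_mul, abs_mul, abs_of_pos (by positivity : (0:ℝ) < 1 + 1 / (2 * k)),
      abs_of_nonneg (by positivity : (0:ℝ) ≤ (‖Ψ (zz x y)‖ ^ 2) ^ (1 + 1 / (2 * k) - 1)), abs_two]
    calc 2 * |inner ℝ (Ψ (zz x y)) v| * (1 + 1 / (2 * k)) * (‖Ψ (zz x y)‖ ^ 2) ^ (1 + 1 / (2 * k) - 1)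
        ≤ 2 * ((C * GG x y ^ (-k)) * (C * GG x y ^ (-(k + 1 / 2)))) * 2 * (C ^ 4 * GG x y ^ (-(1:ℝ))) := by
          gcongr; linarith
      _ = 4 * C ^ 6 * (GG x y ^ (-k) * GG x y ^ (-(k + 1 / 2)) * GG x y ^ (-(1:ℝ))) := by ring
      _ ≤ _ := by
          rw [← Real.rpow_add hG, ← Real.rpow_add hG]
          gcongr
          linarith
  refine core_ineq (C := 4 * C ^ 6) (P := fun x y => ‖Ψ (zz x y)‖ ^ 2) (V := fun x y => ‖Ψ1 (zz x y)‖ ^ 2)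
    (Ux := fun x y => 2 * inner ℝ (Ψ (zz x y)) (Ψ1 (zz x y) * 1) * (1 + 1 / (2 * k)) * (‖Ψ (zz x y)‖ ^ 2) ^ (1 + 1 / (2 * k) - 1))
    (Uy := fun x y => 2 * inner ℝ (Ψ (zz x y)) (Ψ1 (zz x y) * Complex.I) * (1 + 1 / (2 * k)) * (‖Ψ (zz x y)‖ ^ 2) ^ (1 + 1 / (2 * k) - 1))
    hk hR (fun x y _ => by positivity) cP ?_ ?_ (cΨ1.norm.pow 2) ?_ ?_ ?_ ?_ ?_ ?_ ?_ ?_ ?_ hmass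
  · exact (((continuousOn_const.mul (cΨ.inner (cΨ1.mul continuousOn_const))).mul continuousOn_const).mul cPr)
  · exact (((continuousOn_const.mul (cΨ.inner (cΨ1.mul continuousOn_const))).mul continuousOn_const).mul cPr)
  · intro x y hy
    have h1 := (h.d (zz x y) (by simpa [zz_im] using hy)).comp x (zz_dx x y)
    exact h1.norm_sq.rpow_const (Or.inr (by simp; positivity))
  · intro x y hy
    have h1 := (h.d (zz x y) (by simpa [zz_im] using hy)).comp y (zz_dy x y)
    exact h1.norm_sq.rpow_const (Or.inr (by simp; positivity))
  · intro x y hy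
    have hG := GG_pos x (le_of_lt hy)
    refine (hPs x y hy (1 + 1 / (2 * k)) (by positivity) (by linarith)).trans ?_
    have : 2 * k * (1 + 1 / (2 * k)) = 2 * k + 1 := by field_simp
    rw [this]
    gcongr
    nlinarith [pow_le_pow_right₀ hC (show 4 ≤ 6 by norm_num), pow_pos hC0 6]
  · intro x y hy
    have hG := GG_pos x (le_of_lt hy)
    refine (hPs x y hy (1 + 1 / k) (by positivity) (by linarith)).trans ?_
    have : 2 * k * (1 + 1 / k) = 2 * k + 2 := by field_simp
    rw [this]
    gcongr
    · nlinarith [pow_le_pow_right₀ hC (show 4 ≤ 6 by norm_num), pow_pos hC0 6]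
    · exact GG_ge_one x (le_of_lt hy)
    · norm_num
  · intro x y hy; exact hU x y hy _ (by simp)
  · intro x y hy; exact hU x y hy _ (by simp)
  · intro x y hy
    have hG := GG_pos x (le_of_lt hy)
    rw [abs_of_nonneg (by positivity)]
    calc ‖Ψ1 (zz x y)‖ ^ 2 ≤ (C * GG x y ^ (-(k + 1 / 2))) ^ 2 := by gcongr; exact h.b1 x y hy
      _ = C ^ 2 * GG x y ^ (-(2 * k + 1)) := by
        rw [mul_pow, ← Real.rpow_natCast (GG x y ^ (-(k + 1 / 2))), ← Real.rpow_mul hG.le]; congr 2; push_cast; ring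
      _ ≤ _ := by
        gcongr
        nlinarith [pow_le_pow_right₀ hC (show 2 ≤ 6 by norm_num), pow_pos hC0 6]
  · intro x u hu v hv
    obtain ⟨c, hc, hne⟩ := hnv x u hu v hv
    exact ⟨c, hc, by positivity⟩
  · intro x y hy a b
    set A := Ψ (zz x y)
    set B := Ψ1 (zz x y)
    have e1 : inner ℝ A (B * 1) * a + inner ℝ A (B * Complex.I) * b = inner ℝ A (B * ((a:ℂ) + b * Complex.I)) := by
      simp only [Complex.inner]
      simp
      ring
    have e2 : -(inner ℝ A (B * ((a:ℂ) + b * Complex.I))) ≤ ‖A‖ * (‖B‖ * √(a ^ 2 + b ^ 2)) := by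
      have := (abs_le.1 (abs_real_inner_le_norm A (B * ((a:ℂ) + b * Complex.I)))).1
      rw [norm_mul, Complex.norm_add_mul_I] at this
      linarith
    set S := (‖A‖ ^ 2) ^ (1 + 1 / (2 * k) - 1)
    have hS : 0 ≤ S := by positivity
    have e3 : S ^ 2 * ‖A‖ ^ 2 = (‖A‖ ^ 2) ^ (1 + 1 / k) := by
      rw [Real.rpow_add_of_nonneg (by positivity) (by positivity) (by positivity), Real.rpow_one, mul_comm]
      congr 1
      simp only [S]
      rw [← Real.rpow_natCast, ← Real.rpow_mul (by positivity)]
      congr 1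
      push_cast; field_simp; ring
    have e4 : (√(a ^ 2 + b ^ 2)) ^ 2 = a ^ 2 + b ^ 2 := Real.sq_sqrt (by positivity)
    rw [← e3, ← e4]
    set Q := √(a ^ 2 + b ^ 2)
    have e5 : 2 * (‖B‖ * (S * ‖A‖ * Q)) ≤ θ * ‖B‖ ^ 2 + S ^ 2 * ‖A‖ ^ 2 * Q ^ 2 / θ := by
      have : 0 ≤ (θ * ‖B‖ - S * ‖A‖ * Q) ^ 2 / θ := by positivity
      have e : (θ * ‖B‖ - S * ‖A‖ * Q) ^ 2 / θ = θ * ‖B‖ ^ 2 + S ^ 2 * ‖A‖ ^ 2 * Q ^ 2 / θ - 2 * (‖B‖ * (S * ‖A‖ * Q)) := by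
        field_simp; ring
      linarith
    have e6 : (2 + 1 / k) / 2 = 1 + 1 / (2 * k) := by field_simp
    rw [e6]
    have hr : 0 ≤ 1 + 1 / (2 * k) := by positivity
    calc _ = (1 + 1 / (2 * k)) * (2 * S * (-(inner ℝ A (B * 1) * a + inner ℝ A (B * Complex.I) * b))) := by ring
      _ ≤ (1 + 1 / (2 * k)) * (2 * S * (‖A‖ * (‖B‖ * Q))) := by rw [e1]; gcongr
      _ = (1 + 1 / (2 * k)) * (2 * (‖B‖ * (S * ‖A‖ * Q))) := by ring
      _ ≤ _ := by gcongr

open MeasureTheory Metric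

open Set Filter Topology in
lemma bR_pos {k R t : ℝ} (hk : 1 < k) (hR : 0 < R) :
    0 < ∫ ξ in (-R)..R, ∫ η in (0:ℝ)..R, η ^ (2 * k) * GG ξ η ^ (-t) := by
  apply intervalIntegral.intervalIntegral_pos_of_pos_on
  · exact (nK_cont hk hR).intervalIntegrable _ _
  · intro x _; exact nK_pos hk hR
  · linarith

open Set Filter Topology in
lemma Adm.bp {k C : ℝ} {Ψ Ψ1 : ℂ → ℂ} (hk : 1 < k) (h : Adm k C Ψ Ψ1) :
    ∀ x, ∀ y > 0, ∀ s : ℝ, 0 ≤ s → |(‖Ψ (zz x y)‖ ^ 2) ^ s| ≤ (C ^ 2) ^ s * GG x y ^ (-(2 * k * s)) := by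
  intro x y hy s hs
  have hG := GG_pos x (le_of_lt hy)
  have hC := h.hC
  have hC0 : 0 < C := by linarith
  rw [abs_of_nonneg (by positivity)]
  calc (‖Ψ (zz x y)‖ ^ 2) ^ s ≤ ((C * GG x y ^ (-k)) ^ 2) ^ s := by gcongr; exact h.b0 x y hy
    _ = _ := by
      rw [mul_pow, Real.mul_rpow (by positivity) (by positivity), ← Real.rpow_natCast (GG x y ^ (-k)),
        ← Real.rpow_mul hG.le, ← Real.rpow_mul hG.le]; congr 2; push_cast; ring

open Set Filter Topology in
lemma mass_pos {k C : ℝ} (hk : 1 < k) {Ψ Ψ1 : ℂ → ℂ} (h : Adm k C Ψ Ψ1)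
    (hnv : ∀ x, ∀ u > 0, ∀ v > u, ∃ c ∈ Icc u v, Ψ (zz x c) ≠ 0) :
    0 < ∫ x, ∫ y in Ioi 0, y ^ (2 * k) * (‖Ψ (zz x y)‖ ^ 2) ^ (1 + 1 / k) := by
  have hk0 : 0 < k := by linarith
  have h2k : 0 ≤ 2 * k := by linarith
  have cpk : ContinuousOn (fun p : ℝ × ℝ => (‖Ψ (zz p.1 p.2)‖ ^ 2) ^ (1 + 1 / k)) (univ ×ˢ Ioi 0) :=
    ((cont_zz h.c0).norm.pow 2).rpow_const (fun y _ => Or.inr (by positivity))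
  have hd : 2 * k / 2 + 1 < 2 * k * (1 + 1 / k) := by field_simp; nlinarith
  obtain ⟨mc, mi, -, -, -, -, msl, -⟩ := slice_facts (F := fun x y => (‖Ψ (zz x y)‖ ^ 2) ^ (1 + 1 / k)) h2k hd cpk
    (fun x y hy => h.bp hk x y hy _ (by positivity))
  have mpos : ∀ x, 0 < ∫ y in Ioi 0, y ^ (2 * k) * (‖Ψ (zz x y)‖ ^ 2) ^ (1 + 1 / k) := by
    intro x
    have hnn : ∀ y > 0, 0 ≤ y ^ (2 * k) * (‖Ψ (zz x y)‖ ^ 2) ^ (1 + 1 / k) := fun y hy => by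
      have : 0 < y := hy
      positivity
    have h1 : 0 < ∫ y in (1:ℝ)..2, y ^ (2 * k) * (‖Ψ (zz x y)‖ ^ 2) ^ (1 + 1 / k) := by
      refine intervalIntegral.integral_pos one_lt_two ?_ ?_ ?_
      · refine ContinuousOn.mul (continuousOn_id.rpow_const (fun _ _ => Or.inr h2k)) ?_
        exact cpk.comp (f := fun y : ℝ => (x, y)) (by fun_prop) (fun y hy => ⟨trivial, lt_of_lt_of_le one_pos hy.1⟩)
      · intro y hy; exact hnn y (lt_trans one_pos hy.1)
      · obtain ⟨c, hc, hcp⟩ := hnv x 1 one_pos 2 one_lt_two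
        have : 0 < c := lt_of_lt_of_le one_pos hc.1
        exact ⟨c, hc, by positivity⟩
    refine h1.trans_le ?_
    rw [intervalIntegral.integral_of_le one_le_two]
    refine setIntegral_mono_set (msl x) ?_ ?_
    · filter_upwards [ae_restrict_mem measurableSet_Ioi] with y hy
      exact hnn y hy
    · exact LE.le.eventuallyLE (show Ioc (1:ℝ) 2 ⊆ Ioi 0 from fun y hy => lt_trans one_pos hy.1)
  rw [integral_pos_iff_support_of_nonneg (fun x => (mpos x).le) mi]
  rw [Function.support_eq_univ (fun x => (mpos x).ne')]
  simp

lemma Adm.smul {k C c : ℝ} {Ψ Ψ1 : ℂ → ℂ} (h : Adm k C Ψ Ψ1) (hc : 0 < c) :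
    Adm k (max 1 (c * C)) (fun z => (c:ℂ) * Ψ z) (fun z => (c:ℂ) * Ψ1 z) where
  hC := le_max_left _ _
  d := fun z hz => (h.d z hz).const_mul _
  c1 := continuousOn_const.mul h.c1
  b0 := fun x y hy => by
    have hG := GG_pos x (le_of_lt hy)
    have := h.b0 x y hy
    rw [norm_mul, Complex.norm_real, Real.norm_of_nonneg hc.le]
    calc c * ‖Ψ (zz x y)‖ ≤ c * (C * GG x y ^ (-k)) := by gcongr
      _ = (c * C) * GG x y ^ (-k) := by ring
      _ ≤ _ := by gcongr; exact le_max_right _ _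
  b1 := fun x y hy => by
    have hG := GG_pos x (le_of_lt hy)
    have := h.b1 x y hy
    rw [norm_mul, Complex.norm_real, Real.norm_of_nonneg hc.le]
    calc c * ‖Ψ1 (zz x y)‖ ≤ c * (C * GG x y ^ (-(k + 1 / 2))) := by gcongr
      _ = (c * C) * GG x y ^ (-(k + 1 / 2)) := by ring
      _ ≤ _ := by gcongr; exact le_max_right _ _

open Set Filter Topology in
lemma Y_bound_R {k R C E : ℝ} (hk : 1 < k) (hR : 0 < R) (hE0 : 0 < E) {Ψ Ψ1 : ℂ → ℂ} (h : Adm k C Ψ Ψ1)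
    (hnv : ∀ x, ∀ u > 0, ∀ v > u, ∃ c ∈ Icc u v, Ψ (zz x c) ≠ 0)
    (hE : (∫ x, ∫ y in Ioi 0, y ^ (2 * k) * ‖Ψ1 (zz x y)‖ ^ 2) ≤ E) {b : ℝ}
    (hb : b = ∫ ξ in (-R)..R, ∫ η in (0:ℝ)..R, η ^ (2 * k) * GG ξ η ^ (-(2 * k + 1))) :
    (∫ x, ∫ y in Ioi 0, y ^ (2 * k - 1) * (‖Ψ (zz x y)‖ ^ 2) ^ (1 + 1 / (2 * k))) ≤
      b * (√E / (2 * k * √b)) ^ (2 + 1 / k) := by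
  have hk0 : 0 < k := by linarith
  have hbpos : 0 < b := hb ▸ bR_pos hk hR
  have hm := mass_pos hk h hnv
  obtain ⟨m, hmdef⟩ : ∃ m, m = ∫ x, ∫ y in Ioi 0, y ^ (2 * k) * (‖Ψ (zz x y)‖ ^ 2) ^ (1 + 1 / k) := ⟨_, rfl⟩
  rw [← hmdef] at hm
  obtain ⟨a, ha⟩ : ∃ a, a = ∫ ξ in (-R)..R, ∫ η in (0:ℝ)..R, η ^ (2 * k) * GG ξ η ^ (-(2 * k + 2)) := ⟨_, rfl⟩
  have hapos : 0 < a := ha ▸ bR_pos hk hR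
  obtain ⟨c, hc, hcm⟩ : ∃ c : ℝ, 0 < c ∧ (c ^ 2) ^ (1 + 1 / k) * m = a := by
    refine ⟨(a / m) ^ (1 / (2 * (1 + 1 / k))), by positivity, ?_⟩
    rw [← Real.rpow_natCast, ← Real.rpow_mul (by positivity), ← Real.rpow_mul (by positivity)]
    have : 1 / (2 * (1 + 1 / k)) * ((2:ℕ):ℝ) * (1 + 1 / k) = 1 := by push_cast; field_simp
    rw [← mul_assoc, this, Real.rpow_one]; field_simp
  have hn : ∀ z : ℂ, ‖(c:ℂ) * z‖ ^ 2 = c ^ 2 * ‖z‖ ^ 2 := fun z => by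
    rw [norm_mul, Complex.norm_real, Real.norm_of_nonneg hc.le, mul_pow]
  set X := ∫ x, ∫ y in Ioi 0, y ^ (2 * k) * ‖Ψ1 (zz x y)‖ ^ 2 with hX
  set Y := ∫ x, ∫ y in Ioi 0, y ^ (2 * k - 1) * (‖Ψ (zz x y)‖ ^ 2) ^ (1 + 1 / (2 * k)) with hY
  have hθ : 0 < √b / (c * √E) := by positivity
  have key := core_psi hk hR hθ (h.smul hc) (fun x u hu v hv => by
    obtain ⟨t, ht, hne⟩ := hnv x u hu v hv
    exact ⟨t, ht, mul_ne_zero (by exact_mod_cast hc.ne') hne⟩) (by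
      rw [← ha, ← hcm, hmdef, ← integral_const_mul]
      congr 1; ext x
      rw [← integral_const_mul]
      congr 1; ext y
      rw [hn, Real.mul_rpow (by positivity) (by positivity)]; ring)
  have eY : (∫ x, ∫ y in Ioi 0, y ^ (2 * k - 1) * (‖(c:ℂ) * Ψ (zz x y)‖ ^ 2) ^ (1 + 1 / (2 * k)))
      = c ^ (2 + 1 / k) * Y := by
    rw [hY, ← integral_const_mul]
    congr 1; ext x
    rw [← integral_const_mul]
    congr 1; ext y
    rw [hn, Real.mul_rpow (by positivity) (by positivity), ← Real.rpow_natCast c, ← Real.rpow_mul hc.le]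
    have : ((2:ℕ):ℝ) * (1 + 1 / (2 * k)) = 2 + 1 / k := by push_cast; field_simp
    rw [this]; ring
  have eX : (∫ x, ∫ y in Ioi 0, y ^ (2 * k) * ‖(c:ℂ) * Ψ1 (zz x y)‖ ^ 2) = c ^ 2 * X := by
    rw [hX, ← integral_const_mul]
    congr 1; ext x
    rw [← integral_const_mul]
    congr 1; ext y
    rw [hn]; ring
  rw [eY, eX, ← hb] at key
  obtain ⟨s, hs⟩ : ∃ s, s = c * √E / (2 * k * √b) := ⟨_, rfl⟩
  have hs0 : 0 < s := by rw [hs]; positivity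
  have sb : √b * √b = b := Real.mul_self_sqrt hbpos.le
  have sE : √E * √E = E := Real.mul_self_sqrt hE0.le
  have sb0 : 0 < √b := by positivity
  have sE0 : 0 < √E := by positivity
  have h1 : √b / (c * √E) * (c ^ 2 * X) ≤ c * √E * √b := by
    calc √b / (c * √E) * (c ^ 2 * X) ≤ √b / (c * √E) * (c ^ 2 * E) := by gcongr
      _ = c * √E * √b := by
        have : E = √E * √E := sE.symm
        field_simp
        rw [Real.sq_sqrt hE0.le]
  have h2 : b / (√b / (c * √E)) = c * √E * √b := by
    field_simp
    rw [Real.sq_sqrt hbpos.le]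
  have h3 : c * √E * √b = 2 * k * s * b := by
    rw [hs]; field_simp
    rw [Real.sq_sqrt hbpos.le]
  have bern : 1 + (2 + 1 / k) * (s - 1) ≤ s ^ (2 + 1 / k) := by
    have := one_add_mul_self_le_rpow_one_add (s := s - 1) (by linarith) (p := 2 + 1 / k)
      (by have : 0 < 1 / k := by positivity
          linarith)
    simpa using this
  have h4 : (2 + 1 / k) / 2 * (√b / (c * √E) * (c ^ 2 * X) + b / (√b / (c * √E))) ≤ (2 + 1 / k) * (2 * k * s * b) := by
    rw [h2]
    rw [h3] at h1 ⊢
    have : 0 < 1 / k := by positivity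
    nlinarith
  have h5 : 2 * k * (c ^ (2 + 1 / k) * Y) ≤ 2 * k * (b * s ^ (2 + 1 / k)) := by
    have h6 : 2 * k * b * (1 + (2 + 1 / k) * (s - 1)) ≤ 2 * k * b * s ^ (2 + 1 / k) := by gcongr
    have h7 : 2 * k * b * (1 + (2 + 1 / k) * (s - 1)) = (2 + 1 / k) * (2 * k * s * b) - (2 * k + 2) * b := by
      field_simp; ring
    linarith
  have h8 : s ^ (2 + 1 / k) = c ^ (2 + 1 / k) * (√E / (2 * k * √b)) ^ (2 + 1 / k) := by
    rw [hs, mul_div_assoc, Real.mul_rpow (by positivity) (by positivity)]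
  rw [h8] at h5
  have hcq : 0 < c ^ (2 + 1 / k) := by positivity
  have h9 : c ^ (2 + 1 / k) * Y ≤ c ^ (2 + 1 / k) * (b * (√E / (2 * k * √b)) ^ (2 + 1 / k)) := by
    have := le_of_mul_le_mul_left h5 (by positivity : 0 < 2 * k)
    linarith
  exact le_of_mul_le_mul_left h9 hcq

open Set Filter Topology in
lemma bR_tendsto {k : ℝ} (hk : 1 < k) :
    Tendsto (fun R : ℝ => ∫ ξ in (-R)..R, ∫ η in (0:ℝ)..R, η ^ (2 * k) * GG ξ η ^ (-(2 * k + 1))) atTop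
      (𝓝 (∫ p, p.2 ^ (2 * k) * GG p.1 p.2 ^ (-(2 * k + 1)) ∂muH)) := by
  have hc : ContinuousOn (fun p : ℝ × ℝ => p.2 ^ (2 * k) * GG p.1 p.2 ^ (-(2 * k + 1))) (univ ×ˢ Ioi 0) := by
    refine ContinuousOn.mul ?_ ?_
    · exact continuousOn_snd.rpow_const (fun p _ => Or.inr (by linarith))
    · exact GG_cont.continuousOn.rpow_const (fun p hp => Or.inl (GG_pos _ (le_of_lt hp.2)).ne')
  have hi : Integrable (fun p : ℝ × ℝ => p.2 ^ (2 * k) * GG p.1 p.2 ^ (-(2 * k + 1))) muH := by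
    refine dom_prod (F := fun x y => y ^ (2 * k) * GG x y ^ (-(2 * k + 1))) (s := 2 * k) (t := 2 * k + 1) (C := 1)
      (by linarith) (by linarith) hc ?_
    intro x y hy
    have hG := GG_pos x (le_of_lt hy)
    have : 0 < y := hy
    rw [abs_of_nonneg (by positivity), one_mul]
  have hcov : AECover muH atTop (fun R : ℝ => (Ioc (-R) R ×ˢ Ioc 0 R : Set (ℝ × ℝ))) := by
    constructor
    · have : ∀ᵐ p ∂muH, p ∈ (univ : Set ℝ) ×ˢ Ioi (0:ℝ) := by
        rw [muH_eq]; exact ae_restrict_mem (MeasurableSet.univ.prod measurableSet_Ioi)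
      filter_upwards [this] with p hp
      filter_upwards [eventually_gt_atTop |p.1|, eventually_gt_atTop p.2] with R h1 h2
      have := abs_lt.1 h1
      exact ⟨⟨this.1, this.2.le⟩, hp.2, h2.le⟩
    · intro R; exact measurableSet_Ioc.prod measurableSet_Ioc
  have := hcov.integral_tendsto_of_countably_generated hi
  refine this.congr' ?_
  filter_upwards [eventually_gt_atTop 0] with R hR
  rw [intervalIntegral.integral_of_le (by linarith)]
  simp_rw [intervalIntegral.integral_of_le hR.le]
  have e : muH.restrict (Ioc (-R) R ×ˢ Ioc 0 R) = (volume.restrict (Ioc (-R) R)).prod (volume.restrict (Ioc 0 R)) := by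
    rw [muH, ← Measure.prod_restrict, Measure.restrict_restrict measurableSet_Ioc]
    congr 2
    exact inter_eq_left.2 Ioc_subset_Ioi_self
  rw [e, integral_prod]
  rw [← e]; exact hi.restrict

open Set Filter Topology in
lemma Y_bound {k C E : ℝ} (hk : 1 < k) (hE0 : 0 < E) {Ψ Ψ1 : ℂ → ℂ} (h : Adm k C Ψ Ψ1)
    (hnv : ∀ x, ∀ u > 0, ∀ v > u, ∃ c ∈ Icc u v, Ψ (zz x c) ≠ 0)
    (hE : (∫ p, p.2 ^ (2 * k) * ‖Ψ1 (zz p.1 p.2)‖ ^ 2 ∂muH) ≤ E) {b : ℝ} (hb0 : 0 < b)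
    (hb : b = ∫ p, p.2 ^ (2 * k) * GG p.1 p.2 ^ (-(2 * k + 1)) ∂muH) :
    (∫ p, p.2 ^ (2 * k - 1) * (‖Ψ (zz p.1 p.2)‖ ^ 2) ^ (1 + 1 / (2 * k)) ∂muH) ≤
      b * (√E / (2 * k * √b)) ^ (2 + 1 / k) := by
  have hk0 : 0 < k := by linarith
  have cpr : ContinuousOn (fun p : ℝ × ℝ => (‖Ψ (zz p.1 p.2)‖ ^ 2) ^ (1 + 1 / (2 * k))) (univ ×ˢ Ioi 0) :=
    ((cont_zz h.c0).norm.pow 2).rpow_const (fun y _ => Or.inr (by positivity))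
  obtain ⟨-, -, -, -, -, -, -, iY⟩ := slice_facts (s := 2 * k - 1) (F := fun x y => (‖Ψ (zz x y)‖ ^ 2) ^ (1 + 1 / (2 * k)))
    (by linarith) (by field_simp; nlinarith) cpr (fun x y hy => h.bp hk x y hy _ (by positivity))
  obtain ⟨-, -, -, -, -, -, -, iX⟩ := slice_facts (s := 2 * k) (t := 2 * k + 1) (C := C ^ 2) (F := fun x y => ‖Ψ1 (zz x y)‖ ^ 2)
    (by linarith) (by linarith) ((cont_zz h.c1).norm.pow 2) (fun x y hy => by
      have hG := GG_pos x (le_of_lt hy)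
      rw [abs_of_nonneg (by positivity)]
      calc ‖Ψ1 (zz x y)‖ ^ 2 ≤ (C * GG x y ^ (-(k + 1 / 2))) ^ 2 := by gcongr; exact h.b1 x y hy
        _ = C ^ 2 * GG x y ^ (-(2 * k + 1)) := by
          rw [mul_pow, ← Real.rpow_natCast (GG x y ^ (-(k + 1 / 2))), ← Real.rpow_mul hG.le]
          congr 2; push_cast; ring)
  rw [muH, integral_prod _ iX] at hE
  rw [muH, integral_prod _ iY]
  have hlim := bR_tendsto hk
  rw [← hb] at hlim
  have h2 : ContinuousAt (fun b : ℝ => b * (√E / (2 * k * √b)) ^ (2 + 1 / k)) b := by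
    refine ContinuousAt.mul continuousAt_id ?_
    refine ContinuousAt.rpow_const ?_ (Or.inr (by positivity))
    refine ContinuousAt.div continuousAt_const ?_ (by positivity)
    exact continuousAt_const.mul Real.continuous_sqrt.continuousAt
  refine ge_of_tendsto (h2.tendsto.comp hlim) ?_
  filter_upwards [eventually_gt_atTop 0] with R hR
  exact Y_bound_R hk hR hE0 h hnv hE rfl

open MeasureTheory Metric

open Set Filter Topology in
lemma dom_x {t C : ℝ} (ht : 1 < t) {F : ℝ → ℝ} {y : ℝ} (hy : 0 < y) (hF : Continuous F)
    (hb : ∀ x, |F x| ≤ C * GG x y ^ (-t)) : Integrable F := by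
  obtain ⟨gx, gy, h1, -, -, -, -, -, h3, -, h4, h4', h5⟩ := dom_exists (s := 0) (t := t) le_rfl (by linarith)
  refine (h1.const_mul |C|).mono' hF.aestronglyMeasurable (Eventually.of_forall fun x => ?_)
  have hG := GG_pos x hy.le
  have h6 := h5 x y hy
  rw [Real.rpow_zero, one_mul] at h6
  rw [Real.norm_eq_abs]
  calc |F x| ≤ C * GG x y ^ (-t) := hb x
    _ ≤ |C| * GG x y ^ (-t) := by gcongr; exact le_abs_self C
    _ ≤ |C| * (gx x * gy y) := by gcongr
    _ ≤ |C| * gx x := by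
      gcongr
      exact mul_le_of_le_one_right (h3 x) (h4' y hy)

lemma inner_bd {C D s t G : ℝ} {u v : ℂ} (hG : 0 < G) (hu : ‖u‖ ≤ C * G ^ (-s)) (hv : ‖v‖ ≤ D * G ^ (-t)) :
    |inner ℝ u v| ≤ (C * D) * G ^ (-(s + t)) := by
  refine (abs_real_inner_le_norm _ _).trans ?_
  calc ‖u‖ * ‖v‖ ≤ (C * G ^ (-s)) * (D * G ^ (-t)) :=
        mul_le_mul hu hv (norm_nonneg _) ((norm_nonneg _).trans hu)
    _ = (C * D) * (G ^ (-s) * G ^ (-t)) := by ring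
    _ = _ := by rw [← Real.rpow_add hG]; congr 2; ring

open Set Filter Topology in
lemma fisher {k C : ℝ} (hk : 1 < k) {Ψ Ψ1 Ψ2 : ℂ → ℂ} (h : Adm k C Ψ Ψ1)
    (d2 : ∀ z : ℂ, 0 < z.im → HasDerivAt Ψ1 (Ψ2 z) z)
    (c2 : ContinuousOn Ψ2 {z : ℂ | 0 < z.im})
    (b2 : ∀ x, ∀ y > 0, ‖Ψ2 (zz x y)‖ ≤ C * GG x y ^ (-(k + 1))) :
    ∫ p, p.2 ^ (2 * k) * ‖Ψ1 (zz p.1 p.2)‖ ^ 2 ∂muH =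
      k * (2 * k - 1) / 2 * ∫ p, p.2 ^ (2 * k - 2) * ‖Ψ (zz p.1 p.2)‖ ^ 2 ∂muH := by
  have hk0 : 0 < k := by linarith
  have hC0 : 0 < C := by linarith [h.hC]
  have hGp : ∀ x, ∀ y > 0, 0 < GG x y := fun x y hy => GG_pos x (le_of_lt hy)
  have cΨ := cont_zz h.c0
  have cΨ1 := cont_zz h.c1
  have cΨ2 := cont_zz c2
  have bP : ∀ x, ∀ y > 0, |‖Ψ (zz x y)‖ ^ 2| ≤ (C * C) * GG x y ^ (-(2 * k)) := fun x y hy => by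
    have := inner_bd (hGp x y hy) (h.b0 x y hy) (h.b0 x y hy)
    rw [real_inner_self_eq_norm_sq] at this
    convert this using 3; ring
  have bV : ∀ x, ∀ y > 0, |‖Ψ1 (zz x y)‖ ^ 2| ≤ (C * C) * GG x y ^ (-(2 * k + 1)) := fun x y hy => by
    have := inner_bd (hGp x y hy) (h.b1 x y hy) (h.b1 x y hy)
    rw [real_inner_self_eq_norm_sq] at this
    convert this using 3; ring
  have bI : ∀ x, ∀ y > 0, |inner ℝ (Ψ (zz x y)) (Ψ2 (zz x y))| ≤ (C * C) * GG x y ^ (-(2 * k + 1)) := fun x y hy => by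
    have := inner_bd (hGp x y hy) (h.b0 x y hy) (b2 x y hy)
    convert this using 3; ring
  have bX : ∀ x, ∀ y > 0, |inner ℝ (Ψ (zz x y)) (Ψ1 (zz x y))| ≤ (C * C) * GG x y ^ (-(2 * k + 1 / 2)) := fun x y hy => by
    have := inner_bd (hGp x y hy) (h.b0 x y hy) (h.b1 x y hy)
    convert this using 3; ring
  have bY : ∀ x, ∀ y > 0, |inner ℝ (Ψ (zz x y)) (Ψ1 (zz x y) * Complex.I)| ≤ (C * C) * GG x y ^ (-(2 * k + 1 / 2)) := fun x y hy => by
    have := inner_bd (v := Ψ1 (zz x y) * Complex.I) (hGp x y hy) (h.b0 x y hy) (show _ ≤ C * GG x y ^ (-(k + 1 / 2)) by rw [norm_mul, Complex.norm_I, mul_one]; exact h.b1 x y hy)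
    convert this using 3; ring
  obtain ⟨-, -, -, -, -, -, sV, iV⟩ := slice_facts (s := 2 * k) (F := fun x y => ‖Ψ1 (zz x y)‖ ^ 2)
    (by linarith) (by linarith) (cΨ1.norm.pow 2) bV
  obtain ⟨-, -, -, -, -, -, sI, iI⟩ := slice_facts (s := 2 * k) (F := fun x y => inner ℝ (Ψ (zz x y)) (Ψ2 (zz x y)))
    (by linarith) (by linarith) (cΨ.inner cΨ2) bI
  obtain ⟨-, -, -, -, -, -, sP, iP⟩ := slice_facts (s := 2 * k - 2) (F := fun x y => ‖Ψ (zz x y)‖ ^ 2)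
    (by linarith) (by linarith) (cΨ.norm.pow 2) bP
  -- x-direction
  have hx : ∀ y > 0, ∫ x, (inner ℝ (Ψ (zz x y)) (Ψ2 (zz x y)) + ‖Ψ1 (zz x y)‖ ^ 2) = 0 := by
    intro y hy
    have hsl : ∀ {F : ℝ × ℝ → ℝ}, ContinuousOn F (univ ×ˢ Ioi 0) → Continuous (fun x => F (x, y)) := by
      intro F hF
      rw [← continuousOn_univ]
      exact hF.comp (f := fun x : ℝ => (x, y)) (by fun_prop) (fun x _ => ⟨trivial, hy⟩)
    refine integral_eq_zero_of_hasDerivAt_of_integrable (f := fun x => inner ℝ (Ψ (zz x y)) (Ψ1 (zz x y))) ?_ ?_ ?_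
    · intro x
      have h1 := (h.d (zz x y) (by simpa [zz_im] using hy)).comp x (zz_dx x y)
      have h2 := (d2 (zz x y) (by simpa [zz_im] using hy)).comp x (zz_dx x y)
      have h3 := h1.inner ℝ h2
      simp only [mul_one, Function.comp_apply] at h3
      rw [real_inner_self_eq_norm_sq] at h3
      exact h3
    · refine Integrable.add ?_ ?_
      · exact dom_x (t := 2 * k + 1) (by linarith) hy (hsl (cΨ.inner cΨ2)) (fun x => bI x y hy)
      · exact dom_x (t := 2 * k + 1) (by linarith) hy (hsl (cΨ1.norm.pow 2)) (fun x => bV x y hy)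
    · exact dom_x (t := 2 * k + 1 / 2) (by linarith) hy (hsl (cΨ.inner cΨ1)) (fun x => bX x y hy)
  have hX : ∫ p, (p.2 ^ (2 * k) * inner ℝ (Ψ (zz p.1 p.2)) (Ψ2 (zz p.1 p.2)) + p.2 ^ (2 * k) * ‖Ψ1 (zz p.1 p.2)‖ ^ 2) ∂muH = 0 := by
    have iS : Integrable (fun p : ℝ × ℝ => p.2 ^ (2 * k) * inner ℝ (Ψ (zz p.1 p.2)) (Ψ2 (zz p.1 p.2)) + p.2 ^ (2 * k) * ‖Ψ1 (zz p.1 p.2)‖ ^ 2) muH := iI.add iV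
    rw [muH, integral_prod_symm _ iS]
    refine setIntegral_eq_zero_of_forall_eq_zero (fun y hy => ?_)
    have := hx y hy
    simp only [← mul_add]
    rw [integral_const_mul, this, mul_zero]
  -- y-direction
  have hy0 : ∀ x, ∫ y in Ioi 0, ((y ^ (2 * k) * ‖Ψ1 (zz x y)‖ ^ 2 - y ^ (2 * k) * inner ℝ (Ψ (zz x y)) (Ψ2 (zz x y)))
      - k * (2 * k - 1) * (y ^ (2 * k - 2) * ‖Ψ (zz x y)‖ ^ 2)) = 0 := by
    intro x
    have hB1 : ∀ y > 0, |y ^ (2 * k) * inner ℝ (Ψ (zz x y)) (Ψ1 (zz x y) * Complex.I)| ≤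
        (C * C) * (y ^ (2 * k) * GG x y ^ (-(2 * k + 1 / 2))) := fun y hy => by
      have hy' : 0 < y := hy
      rw [abs_mul, abs_of_nonneg (by positivity : 0 ≤ y ^ (2 * k))]
      calc _ ≤ y ^ (2 * k) * ((C * C) * GG x y ^ (-(2 * k + 1 / 2))) := by gcongr; exact bY x y hy
        _ = _ := by ring
    have hB2 : ∀ y > 0, |y ^ (2 * k - 1) * ‖Ψ (zz x y)‖ ^ 2| ≤
        (C * C) * (y ^ (2 * k - 1) * GG x y ^ (-(2 * k))) := fun y hy => by
      have hy' : 0 < y := hy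
      rw [abs_mul, abs_of_nonneg (by positivity : 0 ≤ y ^ (2 * k - 1))]
      calc _ ≤ y ^ (2 * k - 1) * ((C * C) * GG x y ^ (-(2 * k))) := by gcongr; exact bP x y hy
        _ = _ := by ring
    have z1 : (0:ℝ) ^ (2 * k) = 0 := Real.zero_rpow (by linarith)
    have z2 : (0:ℝ) ^ (2 * k - 1) = 0 := Real.zero_rpow (by linarith)
    have lim0 : ∀ {s t : ℝ} {F : ℝ → ℝ}, 0 < s → 0 < t → F 0 = 0 →
        (∀ y > 0, |F y| ≤ (C * C) * (y ^ s * GG x y ^ (-t))) → ContinuousWithinAt F (Ici 0) 0 := by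
      intro s t F hs ht hF0 hF
      rw [ContinuousWithinAt, hF0]
      refine squeeze_zero_norm' (a := fun y : ℝ => (C * C) * y ^ s) ?_ ?_
      · filter_upwards [self_mem_nhdsWithin] with y hy
        rcases (show (0:ℝ) ≤ y from hy).eq_or_lt with rfl | hy
        · rw [hF0]; simp; positivity
        · refine (hF y hy).trans ?_
          have := Real.rpow_le_one_of_one_le_of_nonpos (GG_ge_one x hy.le) (by linarith : -t ≤ 0)
          gcongr
          exact mul_le_of_le_one_right (by positivity) this
      · have : Tendsto (fun y : ℝ => (C * C) * y ^ s) (𝓝 0) (𝓝 ((C * C) * 0 ^ s)) :=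
          ((Real.continuousAt_rpow_const 0 s (Or.inr hs.le)).tendsto).const_mul _
        rw [Real.zero_rpow hs.ne', mul_zero] at this
        exact this.mono_left nhdsWithin_le_nhds
    have key := integral_Ioi_of_hasDerivAt_of_tendsto (a := 0) (m := 0 - k * 0)
      (f := fun y => y ^ (2 * k) * inner ℝ (Ψ (zz x y)) (Ψ1 (zz x y) * Complex.I) - k * (y ^ (2 * k - 1) * ‖Ψ (zz x y)‖ ^ 2))
      (f' := fun y => (y ^ (2 * k) * ‖Ψ1 (zz x y)‖ ^ 2 - y ^ (2 * k) * inner ℝ (Ψ (zz x y)) (Ψ2 (zz x y)))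
      - k * (2 * k - 1) * (y ^ (2 * k - 2) * ‖Ψ (zz x y)‖ ^ 2)) ?_ ?_ ?_ ?_
    · rw [key, z1, z2]; ring
    · refine ContinuousWithinAt.sub ?_ (ContinuousWithinAt.mul continuousWithinAt_const ?_)
      · exact lim0 (s := 2 * k) (t := 2 * k + 1 / 2) (by linarith) (by linarith) (by rw [z1, zero_mul]) hB1
      · exact lim0 (s := 2 * k - 1) (t := 2 * k) (by linarith) (by linarith) (by rw [z2, zero_mul]) hB2
    · intro y hy
      have hy' : 0 < y := hy
      have h1 := (h.d (zz x y) (by simpa [zz_im] using hy)).comp y (zz_dy x y)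
      have h2 := (d2 (zz x y) (by simpa [zz_im] using hy)).comp y (zz_dy x y)
      have h3 := h1.inner ℝ (h2.mul_const Complex.I)
      have h4 := h1.norm_sq
      have r1 := (Real.hasDerivAt_rpow_const (x := y) (p := 2 * k) (Or.inl hy'.ne'))
      have r2 := (Real.hasDerivAt_rpow_const (x := y) (p := 2 * k - 1) (Or.inl hy'.ne'))
      have h5 := (r1.mul h3).sub ((r2.mul h4).const_mul k)
      refine h5.congr_deriv ?_
      simp only [Function.comp_apply]
      have e1 : Ψ2 (zz x y) * Complex.I * Complex.I = - Ψ2 (zz x y) := by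
        rw [mul_assoc, Complex.I_mul_I]; ring
      rw [e1, inner_neg_right, real_inner_self_eq_norm_sq, norm_mul, Complex.norm_I, mul_one,
        show 2 * k - 1 - 1 = 2 * k - 2 by ring]
      ring
    · exact ((sV x).sub (sI x)).sub ((sP x).const_mul _)
    · refine Tendsto.sub ?_ (Tendsto.const_mul k ?_)
      · exact dom_lim (s := 2 * k) (t := 2 * k + 1 / 2) (by linarith) (by linarith) x hB1
      · exact dom_lim (s := 2 * k - 1) (t := 2 * k) (by linarith) (by linarith) x hB2
  have iD : Integrable (fun p : ℝ × ℝ => p.2 ^ (2 * k) * ‖Ψ1 (zz p.1 p.2)‖ ^ 2 - p.2 ^ (2 * k) * inner ℝ (Ψ (zz p.1 p.2)) (Ψ2 (zz p.1 p.2))) muH := iV.sub iI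
  have iT : Integrable (fun p : ℝ × ℝ => (p.2 ^ (2 * k) * ‖Ψ1 (zz p.1 p.2)‖ ^ 2 - p.2 ^ (2 * k) * inner ℝ (Ψ (zz p.1 p.2)) (Ψ2 (zz p.1 p.2)))
      - k * (2 * k - 1) * (p.2 ^ (2 * k - 2) * ‖Ψ (zz p.1 p.2)‖ ^ 2)) muH := iD.sub (iP.const_mul _)
  have hY : ∫ p, ((p.2 ^ (2 * k) * ‖Ψ1 (zz p.1 p.2)‖ ^ 2 - p.2 ^ (2 * k) * inner ℝ (Ψ (zz p.1 p.2)) (Ψ2 (zz p.1 p.2)))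
      - k * (2 * k - 1) * (p.2 ^ (2 * k - 2) * ‖Ψ (zz p.1 p.2)‖ ^ 2)) ∂muH = 0 := by
    rw [muH, integral_prod _ iT]
    refine integral_eq_zero_of_ae (Eventually.of_forall fun x => ?_)
    exact hy0 x
  rw [integral_add iI iV] at hX
  rw [integral_sub iD (iP.const_mul _), integral_sub iV iI, integral_const_mul] at hY
  linarith

open MeasureTheory Metric

/-- Cayley transform of the upper half plane to the disc. -/
noncomputable def cay (z : ℂ) : ℂ := 1 - 2 * Complex.I / (z + Complex.I)

/-- Transfer of a function on the disc to the half plane. -/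
noncomputable def FA (s : ℝ) (A : ℂ → ℂ) (z : ℂ) : ℂ := A (cay z) * (z + Complex.I) ^ ((-s : ℝ) : ℂ)

/-- Derivative rule for `FA`. -/
noncomputable def dA (s : ℝ) (A : ℂ → ℂ) (ζ : ℂ) : ℂ := deriv A ζ * (1 - ζ) - (s : ℂ) * A ζ

lemma w_ne {z : ℂ} (hz : 0 < z.im) : z + Complex.I ≠ 0 := by
  intro h
  have := congrArg Complex.im h
  simp at this
  linarith

lemma w_slit {z : ℂ} (hz : 0 < z.im) : z + Complex.I ∈ Complex.slitPlane := by
  right; simp; linarith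

lemma norm_w (x y : ℝ) : ‖zz x y + Complex.I‖ ^ 2 = GG x y := by
  rw [← Complex.normSq_eq_norm_sq, Complex.normSq_apply]
  simp [zz, GG]; ring

lemma cay_mul {z : ℂ} (hz : 0 < z.im) : cay z * (z + Complex.I) = z - Complex.I := by
  have := w_ne hz
  unfold cay; field_simp; ring

lemma one_sub_cay (x : ℝ) {y : ℝ} (hy : 0 < y) : 1 - ‖cay (zz x y)‖ ^ 2 = 4 * y / GG x y := by
  have hG := GG_pos x hy.le
  have h1 : ‖cay (zz x y)‖ ^ 2 * GG x y = x ^ 2 + (y - 1) ^ 2 := by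
    rw [← norm_w, ← mul_pow, ← norm_mul, cay_mul (by rw [zz_im]; exact hy),
      ← Complex.normSq_eq_norm_sq, Complex.normSq_apply]
    simp [zz]; ring
  rw [eq_div_iff hG.ne', sub_mul, h1, GG]; ring

lemma zz_eta (z : ℂ) : zz z.re z.im = z := Complex.re_add_im z

lemma cay_mem {z : ℂ} (hz : 0 < z.im) : cay z ∈ ball (0:ℂ) 1 := by
  have h := one_sub_cay z.re hz
  have hG := GG_pos z.re hz.le
  rw [zz_eta] at h
  have : 0 < 4 * z.im / GG z.re z.im := by positivity
  rw [mem_ball_zero_iff]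
  nlinarith [norm_nonneg (cay z)]

lemma cay_deriv {z : ℂ} (hz : 0 < z.im) : HasDerivAt cay (2 * Complex.I / (z + Complex.I) ^ 2) z := by
  have h0 := w_ne hz
  have h1 : HasDerivAt (fun z : ℂ => z + Complex.I) 1 z := (hasDerivAt_id z).add_const _
  have h2 := ((h1.inv h0).const_mul (2 * Complex.I)).const_sub 1
  refine h2.congr_deriv ?_
  field_simp

lemma FA_deriv {s : ℝ} {A : ℂ → ℂ} {z : ℂ} (hz : 0 < z.im) (hA : DifferentiableAt ℂ A (cay z)) :
    HasDerivAt (FA s A) (FA (s + 1) (dA s A) z) z := by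
  have h0 := w_ne hz
  have h1 : HasDerivAt (fun z : ℂ => z + Complex.I) 1 z := (hasDerivAt_id z).add_const _
  have h2 := h1.cpow_const (c := ((-s : ℝ) : ℂ)) (w_slit hz)
  have h3 := (hA.hasDerivAt.comp z (cay_deriv hz)).mul h2
  refine h3.congr_deriv ?_
  have e1 : (z + Complex.I) ^ (((-s : ℝ) : ℂ) - 1) = (z + Complex.I) ^ ((-(s + 1) : ℝ) : ℂ) := by
    congr 1; push_cast; ring
  have e2 : (z + Complex.I) ^ ((-s : ℝ) : ℂ) = (z + Complex.I) ^ ((-(s + 1) : ℝ) : ℂ) * (z + Complex.I) := by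
    rw [← e1, Complex.cpow_sub _ _ h0, Complex.cpow_one, div_mul_cancel₀ _ h0]
  have e3 : 1 - cay z = 2 * Complex.I / (z + Complex.I) := by unfold cay; ring
  simp only [FA, dA, Function.comp_apply]
  rw [e1, e2, e3]
  push_cast
  field_simp
  ring

lemma FA_norm {s : ℝ} {A : ℂ → ℂ} (x : ℝ) {y : ℝ} (hy : 0 < y) :
    ‖FA s A (zz x y)‖ = ‖A (cay (zz x y))‖ * GG x y ^ (-(s / 2)) := by
  rw [FA, norm_mul, Complex.norm_cpow_real]
  congr 1
  rw [← norm_w, ← Real.rpow_natCast, ← Real.rpow_mul (norm_nonneg _)]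
  congr 1; push_cast; ring

lemma dA_diff {s : ℝ} {A : ℂ → ℂ} {U : Set ℂ} (hU : IsOpen U) (hA : DifferentiableOn ℂ A U) :
    DifferentiableOn ℂ (dA s A) U := by
  unfold dA
  exact ((hA.deriv hU).mul (by fun_prop)).sub (hA.const_mul _)

lemma FA_cont {s : ℝ} {A : ℂ → ℂ} {U : Set ℂ} (hU : IsOpen U) (hUD : closedBall (0:ℂ) 1 ⊆ U)
    (hA : DifferentiableOn ℂ A U) : ContinuousOn (FA s A) {z : ℂ | 0 < z.im} := fun z hz =>
  (FA_deriv hz (hA.differentiableAt (hU.mem_nhds (hUD (ball_subset_closedBall (cay_mem hz)))))).continuousAt.continuousWithinAt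

lemma bdd_disc {A : ℂ → ℂ} {U : Set ℂ} (hUD : closedBall (0:ℂ) 1 ⊆ U)
    (hA : DifferentiableOn ℂ A U) : ∃ M, ∀ z : ℂ, 0 < z.im → ‖A (cay z)‖ ≤ M := by
  obtain ⟨M, hM⟩ := (isCompact_closedBall (0:ℂ) 1).exists_bound_of_continuousOn (hA.continuousOn.mono hUD)
  exact ⟨M, fun z hz => hM _ (ball_subset_closedBall (cay_mem hz))⟩

lemma FA_adm {k : ℝ} {A : ℂ → ℂ} {U : Set ℂ} (hU : IsOpen U) (hUD : closedBall (0:ℂ) 1 ⊆ U)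
    (hA : DifferentiableOn ℂ A U) : ∃ C, Adm k C (FA (2 * k) A) (FA (2 * k + 1) (dA (2 * k) A)) ∧
      ∀ x, ∀ y > 0, ‖FA (2 * k + 1 + 1) (dA (2 * k + 1) (dA (2 * k) A)) (zz x y)‖ ≤ C * GG x y ^ (-(k + 1)) := by
  have hB := dA_diff (s := 2 * k) hU hA
  have hB2 := dA_diff (s := 2 * k + 1) hU hB
  obtain ⟨M0, h0⟩ := bdd_disc hUD hA
  obtain ⟨M1, h1⟩ := bdd_disc hUD hB
  obtain ⟨M2, h2⟩ := bdd_disc hUD hB2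
  refine ⟨max (max 1 M0) (max M1 M2), ⟨?_, ?_, ?_, ?_, ?_⟩, ?_⟩
  · exact (le_max_left _ _).trans (le_max_left _ _)
  · intro z hz
    exact FA_deriv hz (hA.differentiableAt (hU.mem_nhds (hUD (ball_subset_closedBall (cay_mem hz)))))
  · exact FA_cont hU hUD hB
  · intro x y hy
    have hG := GG_pos x (le_of_lt hy)
    rw [FA_norm x hy, show 2 * k / 2 = k by ring]
    gcongr
    exact (h0 _ (by rw [zz_im]; exact hy)).trans ((le_max_right _ _).trans (le_max_left _ _))
  · intro x y hy
    have hG := GG_pos x (le_of_lt hy)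
    rw [FA_norm x hy, show (2 * k + 1) / 2 = k + 1 / 2 by ring]
    gcongr
    exact (h1 _ (by rw [zz_im]; exact hy)).trans ((le_max_left _ _).trans (le_max_right _ _))
  · intro x y hy
    have hG := GG_pos x (le_of_lt hy)
    rw [FA_norm x hy, show (2 * k + 1 + 1) / 2 = k + 1 by ring]
    gcongr
    exact (h2 _ (by rw [zz_im]; exact hy)).trans ((le_max_right _ _).trans (le_max_right _ _))

lemma fisher_FA {k : ℝ} (hk : 1 < k) {A : ℂ → ℂ} {U : Set ℂ} (hU : IsOpen U) (hUD : closedBall (0:ℂ) 1 ⊆ U)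
    (hA : DifferentiableOn ℂ A U) :
    ∫ p, p.2 ^ (2 * k) * ‖FA (2 * k + 1) (dA (2 * k) A) (zz p.1 p.2)‖ ^ 2 ∂muH =
      k * (2 * k - 1) / 2 * ∫ p, p.2 ^ (2 * k - 2) * ‖FA (2 * k) A (zz p.1 p.2)‖ ^ 2 ∂muH := by
  obtain ⟨C, hC, hC2⟩ := FA_adm (k := k) hU hUD hA
  have hB := dA_diff (s := 2 * k) hU hA
  have hB2 := dA_diff (s := 2 * k + 1) hU hB
  exact fisher hk hC (fun z hz => FA_deriv hz (hB.differentiableAt (hU.mem_nhds (hUD (ball_subset_closedBall (cay_mem hz))))))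
    (FA_cont hU hUD hB2) hC2

/-- Inverse Cayley transform. -/
noncomputable def icay (ζ : ℂ) : ℂ := 2 * Complex.I / (1 - ζ) - Complex.I

lemma one_sub_ne {ζ : ℂ} (hζ : ζ ∈ ball (0:ℂ) 1) : 1 - ζ ≠ 0 := by
  intro h
  have : ζ = 1 := (sub_eq_zero.1 h).symm
  rw [this] at hζ
  simp at hζ

lemma cay_icay {ζ : ℂ} (hζ : ζ ∈ ball (0:ℂ) 1) : cay (icay ζ) = ζ := by
  have := one_sub_ne hζ
  unfold cay icay
  have h2 : (Complex.I : ℂ) ≠ 0 := Complex.I_ne_zero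
  field_simp
  ring

lemma icay_im {ζ : ℂ} (hζ : ζ ∈ ball (0:ℂ) 1) : 0 < (icay ζ).im := by
  have h1 := one_sub_ne hζ
  have h2 : 0 < Complex.normSq (1 - ζ) := Complex.normSq_pos.2 h1
  rw [mem_ball_zero_iff] at hζ
  have h3 : Complex.normSq ζ < 1 := by
    rw [Complex.normSq_eq_norm_sq]; nlinarith [norm_nonneg ζ]
  have e : (icay ζ).im = (1 - Complex.normSq ζ) / Complex.normSq (1 - ζ) := by
    unfold icay
    rw [eq_div_iff h2.ne', Complex.sub_im, Complex.div_im]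
    have h4 := h2.ne'
    field_simp
    simp [Complex.normSq_apply]
    ring
  rw [e]
  exact div_pos (by linarith) h2

open Set Filter Topology in
lemma FA_nv {k : ℝ} {A : ℂ → ℂ} {U : Set ℂ} (hU : IsOpen U) (hUD : closedBall (0:ℂ) 1 ⊆ U)
    (hA : DifferentiableOn ℂ A U) (hne : ∃ ζ ∈ ball (0:ℂ) 1, A ζ ≠ 0) :
    ∀ x, ∀ u > 0, ∀ v > u, ∃ c ∈ Icc u v, FA (2 * k) A (zz x c) ≠ 0 := by
  intro x u hu v hv
  by_contra! hcon
  have hHo : IsOpen {z : ℂ | 0 < z.im} := isOpen_lt continuous_const Complex.continuous_im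
  have han : AnalyticOnNhd ℂ (FA (2 * k) A) {z : ℂ | 0 < z.im} := by
    refine DifferentiableOn.analyticOnNhd ?_ hHo
    intro z hz
    exact (FA_deriv hz (hA.differentiableAt (hU.mem_nhds (hUD (ball_subset_closedBall (cay_mem hz)))))).differentiableAt.differentiableWithinAt
  have hpc : IsPreconnected {z : ℂ | 0 < z.im} := (convex_halfSpace_im_gt 0).isPreconnected
  have hm : u < (u + v) / 2 ∧ (u + v) / 2 < v := ⟨by linarith, by linarith⟩
  have hz0 : zz x ((u + v) / 2) ∈ {z : ℂ | 0 < z.im} := by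
    simp only [mem_ofPred_eq, zz_im]; linarith [hu.lt]
  have hinj : Function.Injective (zz x) := fun a b hab => by
    have := congrArg Complex.im hab
    simpa [zz_im] using this
  have htend : Tendsto (zz x) (𝓝[≠] ((u + v) / 2)) (𝓝[≠] (zz x ((u + v) / 2))) :=
    (zz_dy x _).continuousAt.continuousWithinAt.tendsto_nhdsWithin (fun c hc => hinj.ne hc)
  have hfreq : ∃ᶠ z in 𝓝[≠] (zz x ((u + v) / 2)), FA (2 * k) A z = 0 := by
    refine htend.frequently (Eventually.frequently ?_)
    filter_upwards [nhdsWithin_le_nhds (Icc_mem_nhds hm.1 hm.2)] with c hc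
    exact hcon c hc
  have h0 := han.eqOn_zero_of_preconnected_of_frequently_eq_zero hpc hz0 hfreq
  obtain ⟨ζ, hζ, hζn⟩ := hne
  have h1 := h0 (icay_im hζ)
  simp only [FA, cay_icay hζ, Pi.zero_apply, mul_eq_zero, hζn, false_or] at h1
  exact w_ne (icay_im hζ) (Complex.cpow_eq_zero_iff _ _ |>.1 h1).1

open MeasureTheory Metric

open Set Filter Topology in
lemma disc_cov (g : ℂ → ℝ) :
    ∫ ζ in ball (0:ℂ) 1, g ζ = ∫ p, 4 / GG p.1 p.2 ^ 2 * g (cay (zz p.1 p.2)) ∂muH := by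
  have hHo : IsOpen {z : ℂ | 0 < z.im} := isOpen_lt continuous_const Complex.continuous_im
  have himg : cay '' {z : ℂ | 0 < z.im} = ball (0:ℂ) 1 := by
    apply Subset.antisymm
    · rintro _ ⟨z, hz, rfl⟩; exact cay_mem hz
    · intro ζ hζ; exact ⟨icay ζ, icay_im hζ, cay_icay hζ⟩
  have hinj : InjOn cay {z : ℂ | 0 < z.im} := by
    intro a ha b hb hab
    have ha0 := w_ne ha
    have hb0 := w_ne hb
    unfold cay at hab
    have h1 : 2 * Complex.I / (a + Complex.I) = 2 * Complex.I / (b + Complex.I) := by linear_combination -hab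
    have hI : (Complex.I : ℂ) ≠ 0 := Complex.I_ne_zero
    field_simp at h1
    linear_combination -h1
  have h1 := integral_image_eq_integral_abs_det_fderiv_smul volume hHo.measurableSet
    (fun z hz => ((cay_deriv hz).hasFDerivAt.restrictScalars ℝ).hasFDerivWithinAt) hinj g
  rw [himg] at h1
  rw [h1]
  have hmp := Complex.volume_preserving_equiv_real_prod.symm
  rw [muH_eq, ← hmp.setIntegral_preimage_emb (MeasurableEquiv.measurableEmbedding _)]
  have hpre : (Complex.measurableEquivRealProd.symm ⁻¹' {z : ℂ | 0 < z.im}) = (univ : Set ℝ) ×ˢ Ioi (0:ℝ) := by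
    ext p; simp [Complex.measurableEquivRealProd]
  rw [hpre]
  refine setIntegral_congr_fun (MeasurableSet.univ.prod measurableSet_Ioi) (fun p hp => ?_)
  have hz : (Complex.measurableEquivRealProd.symm p) = zz p.1 p.2 := by
    apply Complex.ext <;> simp [zz, Complex.measurableEquivRealProd]
  have hG := GG_pos p.1 (le_of_lt hp.2)
  simp only [hz, smul_eq_mul]
  congr 1
  simp only [ContinuousLinearMap.det, ContinuousLinearMap.coe_restrictScalars, LinearMap.det_restrictScalars,
      Algebra.norm_complex_eq]
  simp [Complex.normSq_eq_norm_sq, ← pow_mul]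
  rw [abs_of_nonneg (by positivity), ← norm_w]
  ring

open Set Filter Topology in
lemma disc_int {a : ℝ} (ha : 0 < a) :
    ∫ ζ in ball (0:ℂ) 1, (1 - ‖ζ‖ ^ 2) ^ a = Real.pi / (a + 1) := by
  have h1 := integral_fun_norm_addHaar (volume : Measure ℂ) (Set.indicator (Iio 1) (fun r : ℝ => (1 - r ^ 2) ^ a))
  have h2 : ∫ ζ in ball (0:ℂ) 1, (1 - ‖ζ‖ ^ 2) ^ a =
      ∫ ζ : ℂ, (Set.indicator (Iio 1) (fun r : ℝ => (1 - r ^ 2) ^ a)) ‖ζ‖ := by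
    rw [← integral_indicator measurableSet_ball]
    congr 1; ext ζ
    by_cases h : ‖ζ‖ < 1
    · rw [indicator_of_mem (by simpa using h), indicator_of_mem (by simpa using h)]
    · rw [indicator_of_notMem (by simpa using h), indicator_of_notMem (by simpa using h)]
  rw [h2, h1]
  have h3 : ∫ y in Ioi (0:ℝ), y ^ (Module.finrank ℝ ℂ - 1) • (Set.indicator (Iio 1) (fun r : ℝ => (1 - r ^ 2) ^ a)) y
      = ∫ y in (0:ℝ)..1, y * (1 - y ^ 2) ^ a := by
    rw [intervalIntegral.integral_of_le zero_le_one, integral_Ioc_eq_integral_Ioo,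
      ← integral_indicator measurableSet_Ioi, ← integral_indicator measurableSet_Ioo]
    congr 1; ext y
    simp only [Complex.finrank_real_complex, indicator, mem_Ioi, mem_Iio, mem_Ioo, smul_eq_mul]
    by_cases h0 : 0 < y <;> by_cases h1 : y < 1 <;> simp [h0, h1]
  have h4 : ∫ y in (0:ℝ)..1, y * (1 - y ^ 2) ^ a = 1 / (2 * (a + 1)) := by
    have := intervalIntegral.integral_eq_sub_of_hasDerivAt (a := 0) (b := 1)
      (f := fun y : ℝ => -((1 - y ^ 2) ^ (a + 1)) / (2 * (a + 1)))
      (f' := fun y => y * (1 - y ^ 2) ^ a) ?_ ?_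
    · rw [this]
      have : (0:ℝ) ^ (a + 1) = 0 := Real.zero_rpow (by linarith)
      norm_num [this]
      field_simp
    · intro y _
      have h5 : HasDerivAt (fun y : ℝ => 1 - y ^ 2) (-(2 * y)) y := by
        simpa using ((hasDerivAt_id y).pow 2).const_sub 1
      have h6 := ((h5.rpow_const (p := a + 1) (Or.inr (by linarith))).neg).div_const (2 * (a + 1))
      refine h6.congr_deriv ?_
      rw [add_sub_cancel_right]
      field_simp
    · apply Continuous.intervalIntegrable
      exact continuous_id.mul (Continuous.rpow_const (by fun_prop) (fun _ => Or.inr ha.le))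
  rw [h3, h4, Complex.finrank_real_complex]
  simp [measureReal_def, Complex.volume_ball]
  field_simp

open MeasureTheory Metric

lemma muH_congr {F H : ℝ × ℝ → ℝ} (h : ∀ x, ∀ y > 0, F (x, y) = H (x, y)) :
    ∫ p, F p ∂muH = ∫ p, H p ∂muH := by
  rw [muH_eq]
  exact setIntegral_congr_fun (MeasurableSet.univ.prod measurableSet_Ioi) (fun p hp => h p.1 p.2 hp.2)

lemma ZD_eq {k : ℝ} (A : ℂ → ℂ) :
    ∫ ζ in ball (0:ℂ) 1, (1 - ‖ζ‖ ^ 2) ^ (2 * k - 2) * ‖A ζ‖ ^ 2 =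
      4 ^ (2 * k - 1) * ∫ p, p.2 ^ (2 * k - 2) * ‖FA (2 * k) A (zz p.1 p.2)‖ ^ 2 ∂muH := by
  rw [disc_cov, ← integral_const_mul]
  refine muH_congr (fun x y hy => ?_)
  have hG := GG_pos x hy.le
  dsimp only
  rw [one_sub_cay x hy, FA_norm x hy, Real.div_rpow (by positivity) hG.le, Real.mul_rpow (by norm_num) hy.le,
    mul_pow, ← Real.rpow_natCast (GG x y ^ (-(2 * k / 2))), ← Real.rpow_mul hG.le,
    show (-(2 * k / 2)) * ((2:ℕ):ℝ) = -(2 + (2 * k - 2)) by push_cast; ring, Real.rpow_neg hG.le,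
    Real.rpow_add hG, show 2 * k - 1 = 1 + (2 * k - 2) by ring, Real.rpow_add (by norm_num : (0:ℝ) < 4),
    Real.rpow_one, Real.rpow_two]
  field_simp

lemma YD_eq {k : ℝ} (hk : 1 < k) (A : ℂ → ℂ) :
    ∫ ζ in ball (0:ℂ) 1, (1 - ‖ζ‖ ^ 2) ^ (2 * k - 1) * (‖A ζ‖ ^ 2) ^ (1 + 1 / (2 * k)) =
      4 ^ (2 * k) * ∫ p, p.2 ^ (2 * k - 1) * (‖FA (2 * k) A (zz p.1 p.2)‖ ^ 2) ^ (1 + 1 / (2 * k)) ∂muH := by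
  rw [disc_cov, ← integral_const_mul]
  refine muH_congr (fun x y hy => ?_)
  have hG := GG_pos x hy.le
  dsimp only
  rw [one_sub_cay x hy, FA_norm x hy, Real.div_rpow (by positivity) hG.le, Real.mul_rpow (by norm_num) hy.le,
    mul_pow, Real.mul_rpow (by positivity) (by positivity), ← Real.rpow_natCast (GG x y ^ (-(2 * k / 2))),
    ← Real.rpow_mul hG.le, ← Real.rpow_mul hG.le,
    show (-(2 * k / 2)) * ((2:ℕ):ℝ) * (1 + 1 / (2 * k)) = -(2 + (2 * k - 1)) by push_cast; field_simp; ring,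
    Real.rpow_neg hG.le,
    Real.rpow_add hG, show (4:ℝ) ^ (2 * k) = 4 ^ (1 + (2 * k - 1)) by congr 1; ring,
    Real.rpow_add (by norm_num : (0:ℝ) < 4),
    Real.rpow_one, Real.rpow_two]
  field_simp

lemma b_val {k : ℝ} (hk : 1 < k) :
    ∫ p, p.2 ^ (2 * k) * GG p.1 p.2 ^ (-(2 * k + 1)) ∂muH = Real.pi / (2 * k * 4 ^ (2 * k)) := by
  have h1 := fisher_FA hk (A := fun _ => 1) isOpen_univ (Set.subset_univ _) (differentiableOn_const _)
  have h2 := ZD_eq (k := k) (fun _ => 1)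
  have h3 : ∫ ζ in ball (0:ℂ) 1, (1 - ‖ζ‖ ^ 2) ^ (2 * k - 2) * ‖(1:ℂ)‖ ^ 2 = Real.pi / (2 * k - 1) := by
    have := disc_int (a := 2 * k - 2) (by linarith)
    simp only [norm_one, one_pow, mul_one]
    rw [this]; congr 1; ring
  rw [h3] at h2
  have h4 : ∫ p, p.2 ^ (2 * k) * ‖FA (2 * k + 1) (dA (2 * k) (fun _ => 1)) (zz p.1 p.2)‖ ^ 2 ∂muH =
      4 * k ^ 2 * ∫ p, p.2 ^ (2 * k) * GG p.1 p.2 ^ (-(2 * k + 1)) ∂muH := by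
    rw [← integral_const_mul]
    refine muH_congr (fun x y hy => ?_)
    have hG := GG_pos x hy.le
    dsimp only
    have h5 : ‖dA (2 * k) (fun _ => 1) (cay (zz x y))‖ = 2 * k := by
      simp [dA]; linarith
    rw [FA_norm x hy, h5, mul_pow, ← Real.rpow_natCast (GG x y ^ _), ← Real.rpow_mul hG.le,
      show (-((2 * k + 1) / 2)) * ((2:ℕ):ℝ) = -(2 * k + 1) by push_cast; ring]
    ring
  rw [h4] at h1
  have h6 : (4:ℝ) ^ (2 * k) = 4 * 4 ^ (2 * k - 1) := by
    conv_rhs => rw [show (4:ℝ) * 4 ^ (2 * k - 1) = 4 ^ (1:ℝ) * 4 ^ (2 * k - 1) by rw [Real.rpow_one]]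
    rw [← Real.rpow_add (by norm_num)]; congr 1; ring
  have h7 : (0:ℝ) < 4 ^ (2 * k - 1) := by positivity
  rw [h6]
  set I := ∫ p, p.2 ^ (2 * k) * GG p.1 p.2 ^ (-(2 * k + 1)) ∂muH
  set J := ∫ p, p.2 ^ (2 * k - 2) * ‖FA (2 * k) (fun _ => 1) (zz p.1 p.2)‖ ^ 2 ∂muH
  have h8 : (2 * k - 1) ≠ 0 := by linarith
  have h9 : k ≠ 0 := by linarith
  rw [eq_comm, eq_div_iff h8] at h2
  rw [eq_div_iff (by positivity), ← h2]
  have : I = (2 * k - 1) * J / (8 * k) := by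
    rw [eq_div_iff (by positivity)]
    apply mul_left_cancel₀ h9
    linarith
  rw [this]; field_simp; ring

lemma disc_ineq {k N : ℝ} (hk : 1 < k) (hN : 0 < N) {A : ℂ → ℂ} {U : Set ℂ} (hU : IsOpen U)
    (hUD : closedBall (0:ℂ) 1 ⊆ U) (hA : DifferentiableOn ℂ A U) (hne : ∃ ζ ∈ ball (0:ℂ) 1, A ζ ≠ 0)
    (hZ : (2 * k - 1) / Real.pi * ∫ ζ in ball (0:ℂ) 1, (1 - ‖ζ‖ ^ 2) ^ (2 * k - 2) * ‖A ζ‖ ^ 2 ≤ N) :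
    (2 * k - 1) / Real.pi * ∫ ζ in ball (0:ℂ) 1, (1 - ‖ζ‖ ^ 2) ^ (2 * k - 1) * (‖A ζ‖ ^ 2) ^ (1 + 1 / (2 * k))
      ≤ (2 * k - 1) / (2 * k) * N ^ (1 + 1 / (2 * k)) := by
  have hpi := Real.pi_pos
  have hk1 : 0 < 2 * k - 1 := by linarith
  have hk0 : 0 < k := by linarith
  obtain ⟨C, hC, -⟩ := FA_adm (k := k) hU hUD hA
  have h4 : (0:ℝ) < 4 ^ (2 * k) := by positivity
  have h6 : (4:ℝ) ^ (2 * k) = 4 * 4 ^ (2 * k - 1) := by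
    conv_rhs => rw [show (4:ℝ) * 4 ^ (2 * k - 1) = 4 ^ (1:ℝ) * 4 ^ (2 * k - 1) by rw [Real.rpow_one]]
    rw [← Real.rpow_add (by norm_num)]; congr 1; ring
  rw [ZD_eq] at hZ
  rw [YD_eq hk]
  have hY := Y_bound (E := 2 * k * Real.pi * N / 4 ^ (2 * k)) hk (by positivity) hC (FA_nv hU hUD hA hne)
    (by
      rw [fisher_FA hk hU hUD hA, h6]
      set J := ∫ p, p.2 ^ (2 * k - 2) * ‖FA (2 * k) A (zz p.1 p.2)‖ ^ 2 ∂muH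
      have h7 : (0:ℝ) < 4 ^ (2 * k - 1) := by positivity
      rw [div_mul_eq_mul_div, div_le_iff₀ hpi] at hZ
      rw [le_div_iff₀ (by positivity)]
      nlinarith)
    (b := Real.pi / (2 * k * 4 ^ (2 * k))) (by positivity) (b_val hk).symm
  have e : (√(2 * k * Real.pi * N / 4 ^ (2 * k)) / (2 * k * √(Real.pi / (2 * k * 4 ^ (2 * k))))) ^ (2 + 1 / k)
      = N ^ (1 + 1 / (2 * k)) := by
    have e1 : √(2 * k * Real.pi * N / 4 ^ (2 * k)) / (2 * k * √(Real.pi / (2 * k * 4 ^ (2 * k)))) = √N := by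
      rw [div_eq_iff (by positivity), show 2 * k * Real.pi * N / 4 ^ (2 * k) =
        (2 * k) ^ 2 * (N * (Real.pi / (2 * k * 4 ^ (2 * k)))) by field_simp,
        Real.sqrt_mul (by positivity), Real.sqrt_sq (by positivity), Real.sqrt_mul hN.le]
      ring
    rw [e1, Real.sqrt_eq_rpow, ← Real.rpow_mul hN.le]
    congr 1; field_simp
  rw [e] at hY
  calc _ ≤ (2 * k - 1) / Real.pi * (4 ^ (2 * k) * (Real.pi / (2 * k * 4 ^ (2 * k)) * N ^ (1 + 1 / (2 * k)))) := by
        gcongr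
    _ = _ := by field_simp

open MeasureTheory Metric

lemma scale_le {k ρ : ℝ} (hk : 1 < k) (h0 : 0 < ρ) (h1 : ρ < 1) {Φ : ℂ → ℂ}
    (hΦ : DifferentiableOn ℂ Φ (ball (0 : ℂ) 1))
    (hI : IntegrableOn (fun ζ => (1 - ‖ζ‖ ^ 2) ^ (2 * k - 2) * ‖Φ ζ‖ ^ 2) (ball (0:ℂ) 1)) :
    ∫ ζ in ball (0:ℂ) 1, (1 - ‖ζ‖ ^ 2) ^ (2 * k - 2) * ‖Φ (ρ • ζ)‖ ^ 2 ≤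
      (ρ ^ 2)⁻¹ * ∫ ζ in ball (0:ℂ) 1, (1 - ‖ζ‖ ^ 2) ^ (2 * k - 2) * ‖Φ ζ‖ ^ 2 := by
  have hcov := Measure.setIntegral_comp_smul_of_pos (volume : Measure ℂ)
    (fun ζ => (1 - ‖ζ‖ ^ 2) ^ (2 * k - 2) * ‖Φ ζ‖ ^ 2) (ball (0:ℂ) 1) h0
  rw [smul_unitBall_of_pos h0, Complex.finrank_real_complex, smul_eq_mul] at hcov
  have hsub : ball (0:ℂ) ρ ⊆ ball 0 1 := ball_subset_ball h1.le
  have hnn : ∀ ζ ∈ ball (0:ℂ) 1, 0 ≤ (1 - ‖ζ‖ ^ 2) ^ (2 * k - 2) * ‖Φ ζ‖ ^ 2 := by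
    intro ζ hζ
    rw [mem_ball_zero_iff] at hζ
    have : 0 ≤ 1 - ‖ζ‖ ^ 2 := by nlinarith [norm_nonneg ζ]
    positivity
  have hmap : ∀ ζ ∈ closedBall (0:ℂ) 1, ρ • ζ ∈ ball (0:ℂ) 1 := by
    intro ζ hζ
    rw [mem_closedBall_zero_iff] at hζ
    rw [mem_ball_zero_iff, norm_smul, Real.norm_of_nonneg h0.le]
    nlinarith [norm_nonneg ζ]
  have hc : ContinuousOn (fun ζ : ℂ => ‖Φ (ρ • ζ)‖ ^ 2) (closedBall 0 1) :=
    ((hΦ.continuousOn.comp (by fun_prop) hmap).norm).pow 2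
  have hcp : ∀ r : ℝ, Continuous (fun ζ : ℂ => (1 - ‖r • ζ‖ ^ 2) ^ (2 * k - 2)) := fun r =>
    Continuous.rpow_const (by fun_prop) (fun _ => Or.inr (by linarith))
  have hcp1 : Continuous (fun ζ : ℂ => (1 - ‖ζ‖ ^ 2) ^ (2 * k - 2)) :=
    Continuous.rpow_const (by fun_prop) (fun _ => Or.inr (by linarith))
  have hIntg1 := ((hcp1.continuousOn.mul hc).integrableOn_compact (μ := volume) (isCompact_closedBall _ _)).mono_set
    ball_subset_closedBall
  have hIntg2 := (((hcp ρ).continuousOn.mul hc).integrableOn_compact (μ := volume) (isCompact_closedBall _ _)).mono_set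
    ball_subset_closedBall
  calc _ ≤ ∫ ζ in ball (0:ℂ) 1, (1 - ‖ρ • ζ‖ ^ 2) ^ (2 * k - 2) * ‖Φ (ρ • ζ)‖ ^ 2 := by
        refine setIntegral_mono_on hIntg1 hIntg2 measurableSet_ball (fun ζ hζ => ?_)
        rw [mem_ball_zero_iff] at hζ
        have h3 : ‖ρ • ζ‖ ≤ ‖ζ‖ := by
          rw [norm_smul, Real.norm_of_nonneg h0.le]; nlinarith [norm_nonneg ζ]
        have h4 : 0 ≤ 1 - ‖ζ‖ ^ 2 := by nlinarith [norm_nonneg ζ]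
        have h5 : (1 - ‖ζ‖ ^ 2) ≤ 1 - ‖ρ • ζ‖ ^ 2 := by gcongr
        have h6 : 0 ≤ 2 * k - 2 := by linarith
        gcongr
    _ = _ := hcov
    _ ≤ _ := by
        refine mul_le_mul_of_nonneg_left ?_ (by positivity)
        exact setIntegral_mono_set hI ((ae_restrict_iff' measurableSet_ball).2 (Filter.Eventually.of_forall hnn))
          hsub.eventuallyLE

open Filter Topology in
lemma q_bound {k : ℝ} (hk : 1 < k) {Φ : ℂ → ℂ}
    (hΦ : DifferentiableOn ℂ Φ (ball (0 : ℂ) 1))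
    (hI : IntegrableOn (fun ζ => (1 - ‖ζ‖ ^ 2) ^ (2 * k - 2) * ‖Φ ζ‖ ^ 2) (ball (0:ℂ) 1))
    (hN : (2 * k - 1) / Real.pi * ∫ ζ in ball (0:ℂ) 1, (1 - ‖ζ‖ ^ 2) ^ (2 * k - 2) * ‖Φ ζ‖ ^ 2 = 1) :
    IntegrableOn (fun ζ => (1 - ‖ζ‖ ^ 2) ^ (2 * k - 1) * (‖Φ ζ‖ ^ 2) ^ (1 + 1 / (2 * k))) (ball (0:ℂ) 1) ∧
    (2 * k - 1) / Real.pi * ∫ ζ in ball (0:ℂ) 1, (1 - ‖ζ‖ ^ 2) ^ (2 * k - 1) * (‖Φ ζ‖ ^ 2) ^ (1 + 1 / (2 * k))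
      ≤ (2 * k - 1) / (2 * k) := by
  have hpi := Real.pi_pos
  have hk1 : 0 < 2 * k - 1 := by linarith
  have hk0 : 0 < k := by linarith
  have hq0 : 0 < 1 + 1 / (2 * k) := by positivity
  obtain ⟨ζ₀, hζ₀, hne⟩ : ∃ ζ ∈ ball (0:ℂ) 1, Φ ζ ≠ 0 := by
    by_contra! hcon
    rw [setIntegral_congr_fun (g := fun _ => (0:ℝ)) measurableSet_ball
      (fun ζ hζ => by simp [hcon ζ hζ])] at hN
    simp at hN
  set G : ℂ → ℝ := fun ζ => (1 - ‖ζ‖ ^ 2) ^ (2 * k - 1) * (‖Φ ζ‖ ^ 2) ^ (1 + 1 / (2 * k)) with hG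
  set H : ℝ → ℂ → ℝ := fun ρ ζ => (1 - ‖ζ‖ ^ 2) ^ (2 * k - 1) * (‖Φ (ρ • ζ)‖ ^ 2) ^ (1 + 1 / (2 * k)) with hH
  have hcp : Continuous (fun ζ : ℂ => (1 - ‖ζ‖ ^ 2) ^ (2 * k - 1)) :=
    Continuous.rpow_const (by fun_prop) (fun _ => Or.inr (by linarith))
  have hGc : ContinuousOn G (ball 0 1) :=
    hcp.continuousOn.mul (((hΦ.continuousOn.norm).pow 2).rpow_const (fun _ _ => Or.inr hq0.le))
  have hmap : ∀ ρ : ℝ, 0 < ρ → ρ < 1 → ∀ ζ ∈ closedBall (0:ℂ) 1, ρ • ζ ∈ ball (0:ℂ) 1 := by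
    intro ρ h0 h1 ζ hζ
    rw [mem_closedBall_zero_iff] at hζ
    rw [mem_ball_zero_iff, norm_smul, Real.norm_of_nonneg h0.le]
    nlinarith [norm_nonneg ζ]
  have hHc : ∀ ρ : ℝ, 0 < ρ → ρ < 1 → ContinuousOn (H ρ) (closedBall 0 1) := fun ρ h0 h1 =>
    hcp.continuousOn.mul ((((hΦ.continuousOn.comp (by fun_prop) (hmap ρ h0 h1)).norm).pow 2).rpow_const
      (fun _ _ => Or.inr hq0.le))
  have hHi : ∀ ρ : ℝ, 0 < ρ → ρ < 1 → IntegrableOn (H ρ) (ball 0 1) := fun ρ h0 h1 =>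
    ((hHc ρ h0 h1).integrableOn_compact (isCompact_closedBall _ _)).mono_set ball_subset_closedBall
  have hnn : ∀ (g : ℂ → ℝ), (∀ ζ, 0 ≤ g ζ) → 
      0 ≤ᵐ[volume.restrict (ball (0:ℂ) 1)] fun ζ => (1 - ‖ζ‖ ^ 2) ^ (2 * k - 1) * g ζ := by
    intro g hg
    refine (ae_restrict_iff' measurableSet_ball).2 (Eventually.of_forall (fun ζ hζ => ?_))
    rw [mem_ball_zero_iff] at hζ
    have : 0 ≤ 1 - ‖ζ‖ ^ 2 := by nlinarith [norm_nonneg ζ]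
    exact mul_nonneg (by positivity) (hg ζ)
  have hGn : 0 ≤ᵐ[volume.restrict (ball (0:ℂ) 1)] G := hnn _ (fun ζ => by positivity)
  have hHn : ∀ ρ, 0 ≤ᵐ[volume.restrict (ball (0:ℂ) 1)] H ρ := fun ρ => hnn _ (fun ζ => by positivity)
  set B : ℝ → ℝ := fun ρ => Real.pi / (2 * k) * ((ρ ^ 2)⁻¹) ^ (1 + 1 / (2 * k)) with hB
  have hHb : ∀ ρ : ℝ, 0 < ρ → ρ < 1 → ‖ζ₀‖ < ρ → ∫ ζ in ball (0:ℂ) 1, H ρ ζ ≤ B ρ := by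
    intro ρ h0 h1 h2
    have hU : IsOpen ((fun ζ : ℂ => ρ • ζ) ⁻¹' (ball (0:ℂ) 1)) := isOpen_ball.preimage (by fun_prop)
    have := disc_ineq (N := (ρ ^ 2)⁻¹) hk (by positivity) (A := fun ζ => Φ (ρ • ζ)) hU (hmap ρ h0 h1)
      (hΦ.comp (by fun_prop) (fun ζ hζ => hζ)) ⟨ρ⁻¹ • ζ₀, by
        rw [mem_ball_zero_iff, norm_smul, norm_inv, Real.norm_of_nonneg h0.le, inv_mul_lt_iff₀ h0, mul_one]
        exact h2, by simpa [smul_smul, h0.ne'] using hne⟩ (by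
        calc _ ≤ (2 * k - 1) / Real.pi * ((ρ ^ 2)⁻¹ *
                ∫ ζ in ball (0:ℂ) 1, (1 - ‖ζ‖ ^ 2) ^ (2 * k - 2) * ‖Φ ζ‖ ^ 2) := by
              gcongr; exact scale_le hk h0 h1 hΦ hI
          _ = _ := by rw [mul_left_comm, hN, mul_one])
    rw [div_mul_eq_mul_div, div_le_iff₀ hpi] at this
    have h3 : (2 * k - 1) / (2 * k) * ((ρ ^ 2)⁻¹) ^ (1 + 1 / (2 * k)) * Real.pi = (2 * k - 1) * B ρ := by
      rw [hB]; ring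
    rw [h3] at this
    exact le_of_mul_le_mul_left this hk1
  obtain ⟨r, -, hr1, hrt⟩ := exists_seq_strictMono_tendsto' (show max ‖ζ₀‖ (1/2:ℝ) < 1 by
    rw [mem_ball_zero_iff] at hζ₀; exact max_lt hζ₀ (by norm_num))
  have hr0 : ∀ n, 0 < r n := fun n => by linarith [(hr1 n).1, le_max_right ‖ζ₀‖ (1/2:ℝ)]
  have hrz : ∀ n, ‖ζ₀‖ < r n := fun n => by linarith [(hr1 n).1, le_max_left ‖ζ₀‖ (1/2:ℝ)]
  have hlim : ∀ ζ ∈ ball (0:ℂ) 1, Tendsto (fun n => H (r n) ζ) atTop (𝓝 (G ζ)) := by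
    intro ζ hζ
    have t1 : Tendsto (fun n => r n • ζ) atTop (𝓝 ζ) := by
      simpa using hrt.smul_const ζ
    have t2 := ((hΦ.differentiableAt (isOpen_ball.mem_nhds hζ)).continuousAt.tendsto.comp t1).norm.pow 2
    exact (t2.rpow_const (Or.inr hq0.le)).const_mul _
  have hBlim : Tendsto (fun n => B (r n)) atTop (𝓝 (Real.pi / (2 * k))) := by
    have t1 := (((hrt.pow 2).inv₀ (by norm_num)).rpow_const (p := 1 + 1 / (2 * k)) (Or.inr hq0.le)).const_mul
      (Real.pi / (2 * k))
    convert t1 using 2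
    simp
  have hlin : ∫⁻ ζ in ball (0:ℂ) 1, ENNReal.ofReal (G ζ) ≤ ENNReal.ofReal (Real.pi / (2 * k)) := by
    calc ∫⁻ ζ in ball (0:ℂ) 1, ENNReal.ofReal (G ζ)
        = ∫⁻ ζ in ball (0:ℂ) 1, liminf (fun n => ENNReal.ofReal (H (r n) ζ)) atTop := by
          refine setLIntegral_congr_fun measurableSet_ball (fun ζ hζ => ?_)
          exact ((ENNReal.continuous_ofReal.tendsto _).comp (hlim ζ hζ)).liminf_eq.symm
      _ ≤ liminf (fun n => ∫⁻ ζ in ball (0:ℂ) 1, ENNReal.ofReal (H (r n) ζ)) atTop :=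
          lintegral_liminf_le' (fun n => (hHi _ (hr0 n) (hr1 n).2).aestronglyMeasurable.aemeasurable.ennreal_ofReal)
      _ ≤ liminf (fun n => ENNReal.ofReal (B (r n))) atTop := by
          refine liminf_le_liminf (Eventually.of_forall (fun n => ?_))
          rw [← ofReal_integral_eq_lintegral_ofReal (hHi _ (hr0 n) (hr1 n).2) (hHn _)]
          exact ENNReal.ofReal_le_ofReal (hHb _ (hr0 n) (hr1 n).2 (hrz n))
      _ = _ := ((ENNReal.continuous_ofReal.tendsto _).comp hBlim).liminf_eq
  have hGm : AEStronglyMeasurable G (volume.restrict (ball (0:ℂ) 1)) := hGc.aestronglyMeasurable measurableSet_ball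
  have hGi : IntegrableOn G (ball (0:ℂ) 1) := by
    refine ⟨hGm, ?_⟩
    rw [hasFiniteIntegral_iff_ofReal hGn]
    exact hlin.trans_lt ENNReal.ofReal_lt_top
  refine ⟨hGi, ?_⟩
  rw [← ofReal_integral_eq_lintegral_ofReal hGi hGn, ENNReal.ofReal_le_ofReal_iff (by positivity)] at hlin
  calc _ ≤ (2 * k - 1) / Real.pi * (Real.pi / (2 * k)) := by gcongr
    _ = _ := by field_simp

lemma nu_int {k : ℝ} (hk : 1 < k) (g h : ℂ → ℝ)
    (hgh : ∀ ζ ∈ ball (0:ℂ) 1, ((1 - ‖ζ‖ ^ 2) ^ 2)⁻¹ * g ζ = h ζ) :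
    (∫ ζ, g ζ ∂(nuMeasure k) = (2 * k - 1) / Real.pi * ∫ ζ in ball (0:ℂ) 1, h ζ) ∧
    (Integrable g (nuMeasure k) ↔ IntegrableOn h (ball (0:ℂ) 1)) := by
  have hpi := Real.pi_pos
  have hc : 0 < (2 * k - 1) / Real.pi := div_pos (by linarith) hpi
  have hm : Measurable (fun ζ : ℂ => ENNReal.ofReal ((2 * k - 1) / Real.pi * ((1 - ‖ζ‖ ^ 2) ^ 2)⁻¹)) := by
    fun_prop
  have hlt : ∀ᵐ ζ ∂(volume.restrict (ball (0:ℂ) 1)),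
      ENNReal.ofReal ((2 * k - 1) / Real.pi * ((1 - ‖ζ‖ ^ 2) ^ 2)⁻¹) < ⊤ :=
    Filter.Eventually.of_forall (fun _ => ENNReal.ofReal_lt_top)
  have e : ∀ ζ ∈ ball (0:ℂ) 1, (ENNReal.ofReal ((2 * k - 1) / Real.pi * ((1 - ‖ζ‖ ^ 2) ^ 2)⁻¹)).toReal • g ζ
      = (2 * k - 1) / Real.pi * h ζ := by
    intro ζ hζ
    rw [ENNReal.toReal_ofReal (by positivity), smul_eq_mul, mul_assoc, hgh ζ hζ]
  constructor
  · rw [nuMeasure, integral_withDensity_eq_integral_toReal_smul hm hlt, ← integral_const_mul]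
    exact setIntegral_congr_fun measurableSet_ball e
  · rw [nuMeasure, integrable_withDensity_iff_integrable_smul' hm hlt]
    change IntegrableOn _ (ball (0:ℂ) 1) volume ↔ _
    rw [integrableOn_congr_fun e measurableSet_ball]
    exact integrable_const_mul_iff (IsUnit.mk0 _ hc.ne') _

lemma jensen_pt {k c F : ℝ} (hk : 1 < k) (hc : 0 < c) (hF : 0 ≤ F) :
    F * Real.log F ≤ 2 * k * (F ^ (1 + 1 / (2 * k)) / c + (Real.log c - 1) * F) := by
  have hk0 : 0 < k := by linarith
  rcases hF.eq_or_lt with rfl | hF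
  · rw [Real.zero_rpow (by positivity)]; simp
  have h1 : Real.log (F ^ (1 / (2 * k)) / c) ≤ F ^ (1 / (2 * k)) / c - 1 :=
    Real.log_le_sub_one_of_pos (by positivity)
  rw [Real.log_div (by positivity) hc.ne', Real.log_rpow hF] at h1
  have h2 : Real.log F = 2 * k * (1 / (2 * k) * Real.log F) := by field_simp
  have h3 : Real.log F ≤ 2 * k * (F ^ (1 / (2 * k)) / c - 1 + Real.log c) := by
    rw [h2]
    exact mul_le_mul_of_nonneg_left (by linarith) (by positivity)
  rw [Real.rpow_add hF, Real.rpow_one]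
  calc F * Real.log F ≤ F * (2 * k * (F ^ (1 / (2 * k)) / c - 1 + Real.log c)) :=
        mul_le_mul_of_nonneg_left h3 hF.le
    _ = _ := by ring

theorem wehrl_entropy_lower_bound
    (k : ℝ) (hk : 1 < k)
    (Φ : ℂ → ℂ) (hΦ : DifferentiableOn ℂ Φ (ball (0 : ℂ) 1))
    (f : ℂ → ℂ) (hf : ∀ ζ, f ζ = (((1 - ‖ζ‖ ^ 2) ^ k : ℝ) : ℂ) * Φ ζ)
    (hnorm : ∫ ζ, ‖f ζ‖ ^ 2 ∂(nuMeasure k) = 1)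
    (hent : Integrable (fun ζ => ‖f ζ‖ ^ 2 * Real.log (‖f ζ‖ ^ 2)) (nuMeasure k)) :
    2 * k * Real.log (2 * k / (2 * k - 1))
      ≤ - ∫ ζ, ‖f ζ‖ ^ 2 * Real.log (‖f ζ‖ ^ 2) ∂(nuMeasure k) := by
  have hk0 : 0 < k := by linarith
  have hk1 : 0 < 2 * k - 1 := by linarith
  have hw : ∀ ζ ∈ ball (0:ℂ) 1, 0 < 1 - ‖ζ‖ ^ 2 := by
    intro ζ hζ
    rw [mem_ball_zero_iff] at hζ
    nlinarith [norm_nonneg ζ]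
  have hfn : ∀ ζ ∈ ball (0:ℂ) 1, ‖f ζ‖ ^ 2 = (1 - ‖ζ‖ ^ 2) ^ (2 * k) * ‖Φ ζ‖ ^ 2 := by
    intro ζ hζ
    have h0 := hw ζ hζ
    rw [hf, norm_mul, Complex.norm_real, Real.norm_of_nonneg (by positivity), mul_pow,
      ← Real.rpow_natCast (_ ^ k), ← Real.rpow_mul h0.le]
    congr 2; push_cast; ring
  obtain ⟨a1, a2⟩ := nu_int hk (fun ζ => ‖f ζ‖ ^ 2) (fun ζ => (1 - ‖ζ‖ ^ 2) ^ (2 * k - 2) * ‖Φ ζ‖ ^ 2) (by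
    intro ζ hζ
    have h0 := hw ζ hζ
    rw [hfn ζ hζ, Real.rpow_sub h0, Real.rpow_two]
    ring)
  obtain ⟨b1, b2⟩ := nu_int hk (fun ζ => (‖f ζ‖ ^ 2) ^ (1 + 1 / (2 * k)))
    (fun ζ => (1 - ‖ζ‖ ^ 2) ^ (2 * k - 1) * (‖Φ ζ‖ ^ 2) ^ (1 + 1 / (2 * k))) (by
    intro ζ hζ
    have h0 := hw ζ hζ
    rw [hfn ζ hζ, Real.mul_rpow (by positivity) (by positivity), ← Real.rpow_mul h0.le,
      show 2 * k * (1 + 1 / (2 * k)) = 2 + (2 * k - 1) by field_simp; ring, Real.rpow_add h0, Real.rpow_two]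
    field_simp)
  have hFi : Integrable (fun ζ => ‖f ζ‖ ^ 2) (nuMeasure k) := by
    by_contra hcon
    rw [integral_undef hcon] at hnorm
    exact zero_ne_one hnorm
  obtain ⟨q1, q2⟩ := q_bound hk hΦ (a2.1 hFi) (by rw [← a1, hnorm])
  have hQi := b2.2 q1
  rw [← b1] at q2
  have hc0 : 0 < (2 * k - 1) / (2 * k) := by positivity
  obtain ⟨c, hc⟩ : ∃ c, c = (2 * k - 1) / (2 * k) := ⟨_, rfl⟩
  rw [← hc] at q2 hc0
  have hmono := integral_mono hent (((hQi.div_const c).add (hFi.const_mul (Real.log c - 1))).const_mul (2 * k))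
    (fun ζ => jensen_pt hk hc0 (sq_nonneg ‖f ζ‖))
  have hlog : Real.log (2 * k / (2 * k - 1)) = - Real.log c := by
    rw [hc, ← Real.log_inv, inv_div]
  have hr : ∫ ζ, 2 * k * ((‖f ζ‖ ^ 2) ^ (1 + 1 / (2 * k)) / c + (Real.log c - 1) * ‖f ζ‖ ^ 2) ∂(nuMeasure k) =
      2 * k * ((∫ ζ, (‖f ζ‖ ^ 2) ^ (1 + 1 / (2 * k)) ∂(nuMeasure k)) / c + (Real.log c - 1) * 1) := by
    rw [integral_const_mul, integral_add (hQi.div_const c) (hFi.const_mul (Real.log c - 1)), integral_div,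
      integral_const_mul, hnorm]
  have hle : (∫ ζ, (‖f ζ‖ ^ 2) ^ (1 + 1 / (2 * k)) ∂(nuMeasure k)) / c ≤ 1 := (div_le_one hc0).2 q2
  have h5 : ∫ ζ, ‖f ζ‖ ^ 2 * Real.log (‖f ζ‖ ^ 2) ∂(nuMeasure k) ≤ 2 * k * Real.log c := by
    refine (hmono.trans_eq hr).trans ?_
    exact mul_le_mul_of_nonneg_left (by linarith) (by positivity)
  rw [hlog]; linarith
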